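/- For every integer n ≥ 2 (with the convention Z_0(x,y) = 1), the adjacent-boundary doubly-refined ASM generating function satisfies the recursion: (z1−1)(z2−1)·Zadj_n(x,y;z1,z2)·Z_{n−2}(x,y) = y·z1·z2·Zadj_{n−1}(x,y;z1,z2)·Z_{n−1}(x,y) + (x(z1−1)(z2−1)−y)·z1·z2·Z_{n−1}(x,y;z1)·Z_{n−1}(x,y;z2) + (z1−1)(z2−1)·Z_{n−1}(x,y)·Z_{n−2}(x,y), as an identity of polynomials in ℤ[x,y,z1,z2]. -/

import Mathlib

open Finset

/-- The `n × n` integer matrix encoded by `e`, with entries in `{-1, 0, 1}`. -/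
def asmMat {n : ℕ} (e : Fin n → Fin n → Fin 3) : Fin n → Fin n → ℤ :=
  fun i j => (e i j : ℤ) - 1

/-- `A` is an alternating sign matrix: all entries lie in `{-1, 0, 1}`, every
partial row sum and every partial column sum is `0` or `1` (equivalently, the
nonzero entries of each row and of each column alternate in sign), and every
complete row sum and column sum is `1`. -/
def IsASM {n : ℕ} (A : Fin n → Fin n → ℤ) : Prop :=
  (∀ i j, A i j = -1 ∨ A i j = 0 ∨ A i j = 1) ∧
  (∀ (i j : Fin n), (∑ j' ∈ univ.filter (fun j' : Fin n => j' ≤ j), A i j') = 0 ∨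
    (∑ j' ∈ univ.filter (fun j' : Fin n => j' ≤ j), A i j') = 1) ∧
  (∀ (i j : Fin n), (∑ i' ∈ univ.filter (fun i' : Fin n => i' ≤ i), A i' j) = 0 ∨
    (∑ i' ∈ univ.filter (fun i' : Fin n => i' ≤ i), A i' j) = 1) ∧
  (∀ i : Fin n, (∑ j, A i j) = 1) ∧
  (∀ j : Fin n, (∑ i, A i j) = 1)

/-- `ν(A)`, the number of generalized inversions of `A`. -/
def nuASM {n : ℕ} (A : Fin n → Fin n → ℤ) : ℕ :=
  (∑ i : Fin n, ∑ i' : Fin n, ∑ j : Fin n, ∑ j' : Fin n,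
      if i < i' ∧ j' ≤ j then A i j * A i' j' else 0).toNat

/-- `μ(A)`, the number of entries of `A` equal to `-1`. -/
def muASM {n : ℕ} (A : Fin n → Fin n → ℤ) : ℕ :=
  (univ.filter (fun p : Fin n × Fin n => A p.1 p.2 = -1)).card

/-- `ρT(A)`, the number of `0`'s to the left of the `1` in the top row of `A`. -/
def rhoT {n : ℕ} (A : Fin n → Fin n → ℤ) : ℕ :=
  (univ.filter (fun j : Fin n =>
    A ⟨0, j.pos⟩ j = 0 ∧ ∃ j' : Fin n, j < j' ∧ A ⟨0, j.pos⟩ j' = 1)).card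

/-- `ρR(A)`, the number of `0`'s below the `1` in the right-most column of `A`. -/
def rhoR {n : ℕ} (A : Fin n → Fin n → ℤ) : ℕ :=
  (univ.filter (fun i : Fin n =>
    A i ⟨n - 1, Nat.sub_lt i.pos Nat.one_pos⟩ = 0 ∧
      ∃ i' : Fin n, i' < i ∧ A i' ⟨n - 1, Nat.sub_lt i.pos Nat.one_pos⟩ = 1)).card

/-- `ρB(A)`, the number of `0`'s to the right of the `1` in the bottom row of `A`. -/
def rhoB {n : ℕ} (A : Fin n → Fin n → ℤ) : ℕ :=
  (univ.filter (fun j : Fin n =>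
    A ⟨n - 1, Nat.sub_lt j.pos Nat.one_pos⟩ j = 0 ∧
      ∃ j' : Fin n, j' < j ∧ A ⟨n - 1, Nat.sub_lt j.pos Nat.one_pos⟩ j' = 1)).card

/-- `ρL(A)`, the number of `0`'s above the `1` in the left-most column of `A`. -/
def rhoL {n : ℕ} (A : Fin n → Fin n → ℤ) : ℕ :=
  (univ.filter (fun i : Fin n =>
    A i ⟨0, i.pos⟩ = 0 ∧ ∃ i' : Fin n, i < i' ∧ A i' ⟨0, i.pos⟩ = 1)).card

open Classical in
/-- The quadruply-refined ASM generating function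
`Zqua_n(x,y;z1,z2,z3,z4) = Σ_A x^{ν(A)} y^{μ(A)} z1^{ρT(A)} z2^{ρR(A)} z3^{ρB(A)} z4^{ρL(A)}`. -/
noncomputable def Zqua (n : ℕ) {R : Type*} [CommRing R] (x y z1 z2 z3 z4 : R) : R :=
  ∑ e : Fin n → Fin n → Fin 3,
    if IsASM (asmMat e) then
      x ^ nuASM (asmMat e) * y ^ muASM (asmMat e) * z1 ^ rhoT (asmMat e) *
        z2 ^ rhoR (asmMat e) * z3 ^ rhoB (asmMat e) * z4 ^ rhoL (asmMat e)
    else 0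

/-- Adjacent-boundary doubly-refined generating function `Zadj_n(x,y;z1,z2)`. -/
noncomputable def Zadj (n : ℕ) {R : Type*} [CommRing R] (x y z1 z2 : R) : R :=
  Zqua n x y z1 1 1 z2

/-- Alternative adjacent-boundary doubly-refined generating function `Zbaradj_n(x,y;z1,z2)`. -/
noncomputable def Zbaradj (n : ℕ) {R : Type*} [CommRing R] (x y z1 z2 : R) : R :=
  Zqua n x y z1 z2 1 1

/-- Triply-refined generating function `Ztri_n(x,y;z1,z2,z3)`. -/
noncomputable def Ztri (n : ℕ) {R : Type*} [CommRing R] (x y z1 z2 z3 : R) : R :=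
  Zqua n x y z1 1 z2 z3

/-- Opposite-boundary doubly-refined generating function `Zopp_n(x,y;z1,z2)`. -/
noncomputable def Zopp (n : ℕ) {R : Type*} [CommRing R] (x y z1 z2 : R) : R :=
  Zqua n x y z1 1 z2 1

/-- Singly-refined generating function `Z_n(x,y;z)`. -/
noncomputable def Zsing (n : ℕ) {R : Type*} [CommRing R] (x y z : R) : R :=
  Zqua n x y z 1 1 1

/-- Unrefined generating function `Z_n(x,y)`.  Note `Zun 0 x y = 1`. -/
noncomputable def Zun (n : ℕ) {R : Type*} [CommRing R] (x y : R) : R :=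
  Zqua n x y 1 1 1 1

/-! Alternating sign matrices are the states of the six-vertex model with domain wall boundary
conditions, the partial sums along rows and columns being the states of the edges. For the
integrable weights the Yang–Baxter equation makes the partition function symmetric in the column
parameters, and together with its values where a row and a column parameter agree and a degree
bound this yields the Izergin–Korepin determinant. The Desnanot–Jacobi identity for that determinant
is a quadratic relation between the partition functions obtained by deleting the first or second row
and the first or second column. When all row parameters but the first and all column parameters but
the first are equal, the partition functions in this relation become the generating functions of
alternating sign matrices of sizes `n`, `n - 1` and `n - 2`, refined along the first row and column.
The values `x = d e` and `y = (1 - d) (1 - e)` are reached in this way for generic `d` and `e`, so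
the recursion holds for all of them, and every `x` and `y` are of this form after adjoining a root
`d` of `d ^ 2 - (x + 1 - y) d + x`. -/

section LineSums

/-- The partial sums of the `i`-th row of `A`; `rowSum A i j.castSucc` and `rowSum A i j.succ` are
the sums just before and just after the entry `A i j`. -/
def rowSum {m n : ℕ} (A : Fin m → Fin n → ℤ) (i : Fin m) : Fin (n + 1) → ℤ :=
  Fin.partialSum (A i)

/-- The partial sums of the `j`-th column of `A`, indexed as in `rowSum`. -/
def colSum {m n : ℕ} (A : Fin m → Fin n → ℤ) (j : Fin n) : Fin (m + 1) → ℤ :=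
  Fin.partialSum fun i => A i j

variable {m n : ℕ}

@[simp]
lemma rowSum_zero (A : Fin m → Fin n → ℤ) (i : Fin m) : rowSum A i 0 = 0 :=
  Fin.partialSum_zero _

@[simp]
lemma colSum_zero (A : Fin m → Fin n → ℤ) (j : Fin n) : colSum A j 0 = 0 :=
  Fin.partialSum_zero _

lemma rowSum_succ (A : Fin m → Fin n → ℤ) (i : Fin m) (j : Fin n) :
    rowSum A i j.succ = rowSum A i j.castSucc + A i j :=
  Fin.partialSum_succ _ _

lemma colSum_succ (A : Fin m → Fin n → ℤ) (i : Fin m) (j : Fin n) :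
    colSum A j i.succ = colSum A j i.castSucc + A i j :=
  Fin.partialSum_succ _ _

lemma partialSum_eq_sum_filter {M : Type*} [AddCommMonoid M] :
    ∀ {n : ℕ} (f : Fin n → M) (j : Fin (n + 1)),
      Fin.partialSum f j = ∑ k with k.castSucc < j, f k
  | 0, _, j => by simp [Fin.fin_one_eq_zero j]
  | n + 1, f, j => by
    cases j using Fin.cases with
    | zero => simp
    | succ j =>
      rw [Fin.partialSum_succ', partialSum_eq_sum_filter, sum_filter, sum_filter,
        Fin.sum_univ_succ, if_pos (by simp)]
      simp [Fin.tail]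

lemma partialSum_succ_eq_sum_filter {M : Type*} [AddCommMonoid M] (f : Fin n → M) (j : Fin n) :
    Fin.partialSum f j.succ = ∑ k with k ≤ j, f k := by
  simp only [partialSum_eq_sum_filter, Fin.castSucc_lt_succ_iff]

lemma partialSum_castSucc_eq_sum_filter {M : Type*} [AddCommMonoid M] (f : Fin n → M)
    (j : Fin n) : Fin.partialSum f j.castSucc = ∑ k with k < j, f k := by
  simp only [partialSum_eq_sum_filter, Fin.castSucc_lt_castSucc_iff]

lemma partialSum_last {M : Type*} [AddCommMonoid M] (f : Fin n → M) :
    Fin.partialSum f (Fin.last n) = ∑ k, f k := by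
  simp only [partialSum_eq_sum_filter, Fin.castSucc_lt_last, filter_true]

lemma isASM_iff {A : Fin n → Fin n → ℤ} :
    IsASM A ↔ (∀ i j, rowSum A i j = 0 ∨ rowSum A i j = 1) ∧
      (∀ j i, colSum A j i = 0 ∨ colSum A j i = 1) ∧
      (∀ i, rowSum A i (Fin.last n) = 1) ∧ ∀ j, colSum A j (Fin.last n) = 1 := by
  simp only [IsASM, rowSum, colSum, ← partialSum_succ_eq_sum_filter, partialSum_last]
  constructor
  · rintro ⟨-, hrow, hcol, hrow', hcol'⟩
    exact ⟨fun i => Fin.cases (by simp) (hrow i), fun j => Fin.cases (by simp) (hcol · j),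
      hrow', hcol'⟩
  · rintro ⟨hrow, hcol, hrow', hcol'⟩
    refine ⟨fun i j => ?_, fun i j => hrow i j.succ, fun i j => hcol j i.succ, hrow', hcol'⟩
    have hstep := Fin.partialSum_succ (A i) j
    have hleft := hrow i j.castSucc
    have hright := hrow i j.succ
    omega

lemma IsASM.transpose {A : Fin n → Fin n → ℤ} (hA : IsASM A) : IsASM fun i j => A j i :=
  have h := isASM_iff.1 hA
  isASM_iff.2 ⟨h.2.1, h.1, h.2.2.2, h.2.2.1⟩

lemma IsASM.zero_row {A : Fin (n + 1) → Fin (n + 1) → ℤ} (hA : IsASM A) (j : Fin (n + 1)) :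
    A 0 j = 0 ∨ A 0 j = 1 := by
  have hstep := colSum_succ A 0 j
  rw [Fin.castSucc_zero, colSum_zero, zero_add] at hstep
  exact hstep ▸ (isASM_iff.1 hA).2.1 j (Fin.succ 0)

end LineSums

section ASMSums

open Classical in
/-- The finite set of alternating sign matrices of size `n`. -/
noncomputable def asmSet (n : ℕ) : Finset (Fin n → Fin n → ℤ) :=
  (univ.filter fun e : Fin n → Fin n → Fin 3 => IsASM (asmMat e)).image asmMat

lemma asmMat_injective {n : ℕ} : Function.Injective (asmMat (n := n)) := by
  intro _ _ h
  ext i j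
  have hij := congrFun (congrFun h i) j
  simp only [asmMat] at hij
  omega

lemma mem_asmSet {n : ℕ} {A : Fin n → Fin n → ℤ} : A ∈ asmSet n ↔ IsASM A := by
  simp only [asmSet, mem_image, mem_filter, mem_univ, true_and]
  refine ⟨fun ⟨_, he, heA⟩ => heA ▸ he, fun hA => ?_⟩
  have hentry (i j) := hA.1 i j
  have heA : asmMat (fun i j => ⟨(A i j + 1).toNat, by have := hentry i j; omega⟩) = A := by
    funext i j
    have := hentry i j
    simp only [asmMat]
    omega
  exact ⟨_, heA.symm ▸ hA, heA⟩

lemma Zqua_eq_sum_asmSet (n : ℕ) {R : Type*} [CommRing R] (x y z1 z2 z3 z4 : R) :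
    Zqua n x y z1 z2 z3 z4 = ∑ A ∈ asmSet n, x ^ nuASM A * y ^ muASM A * z1 ^ rhoT A *
        z2 ^ rhoR A * z3 ^ rhoB A * z4 ^ rhoL A := by
  classical
  rw [Zqua, asmSet, sum_image (fun _ _ _ _ h => asmMat_injective h), sum_filter]

lemma map_Zqua {R S : Type*} [CommRing R] [CommRing S] (f : R →+* S) (n : ℕ)
    (x y z1 z2 z3 z4 : R) :
    f (Zqua n x y z1 z2 z3 z4) = Zqua n (f x) (f y) (f z1) (f z2) (f z3) (f z4) := by
  simp only [Zqua_eq_sum_asmSet, map_sum, map_mul, map_pow]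

end ASMSums

section SixVertex

/-- The Boltzmann weights of the six-vertex model at one vertex; the weights of the two `b` vertices
agree, and the vertex of an entry `1` has weight `1`. -/
structure VertexWeights (R : Type*) where
  /-- The vertex all of whose edges have partial sum `1`. -/
  a₁ : R
  /-- The vertex all of whose edges have partial sum `0`. -/
  a₀ : R
  /-- The other two vertices of an entry `0`. -/
  b : R
  /-- The vertex of an entry `-1`. -/
  c : R

namespace VertexWeights

variable {R S : Type*} [CommRing R] [CommRing S]

/-- The weight of a vertex in terms of its left, top, right and bottom edges, an edge being `true`
when its partial sum is `1`. Configurations violating the ice rule have weight `0`. -/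
def onEdges (w : VertexWeights R) : Bool → Bool → Bool → Bool → R
  | true, true, true, true => w.a₁
  | false, false, false, false => w.a₀
  | true, false, true, false => w.b
  | false, true, false, true => w.b
  | false, false, true, true => 1
  | true, true, false, false => w.c
  | _, _, _, _ => 0

/-- The image of vertex weights under a map of rings. -/
def map (f : R → S) (w : VertexWeights R) : VertexWeights S := ⟨f w.a₁, f w.a₀, f w.b, f w.c⟩

lemma map_onEdges (f : R →+* S) (w : VertexWeights R) (l t r b : Bool) :
    f (w.onEdges l t r b) = (w.map f).onEdges l t r b := by
  cases l <;> cases t <;> cases r <;> cases b <;> simp [onEdges, map]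

lemma onEdges_swap (w : VertexWeights R) (l t r b : Bool) :
    w.onEdges t l b r = w.onEdges l t r b := by
  cases l <;> cases t <;> cases r <;> cases b <;> rfl

lemma right_sub_left_eq_of_onEdges_ne_zero {w : VertexWeights R} {l t r b : Bool}
    (h : w.onEdges l t r b ≠ 0) :
    (r.toNat - l.toNat : ℤ) = b.toNat - t.toNat := by
  revert h
  cases l <;> cases t <;> cases r <;> cases b <;> simp [onEdges]

end VertexWeights

variable {R : Type*} [CommRing R] {m n : ℕ}

/-- The state of the edge of the six-vertex configuration of `A` at a row partial sum. -/
def rowEdge (A : Fin m → Fin n → ℤ) (i : Fin m) (j : Fin (n + 1)) : Bool := rowSum A i j = 1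

/-- The state of the edge of the six-vertex configuration of `A` at a column partial sum. -/
def colEdge (A : Fin m → Fin n → ℤ) (j : Fin n) (i : Fin (m + 1)) : Bool := colSum A j i = 1

/-- The weight of `A` for the site-dependent weights `w`. -/
def asmWeight (w : Fin m → Fin n → VertexWeights R) (A : Fin m → Fin n → ℤ) : R :=
  ∏ i, ∏ j, (w i j).onEdges (rowEdge A i j.castSucc) (colEdge A j i.castSucc)
    (rowEdge A i j.succ) (colEdge A j i.succ)

/-- The partition function of the six-vertex model with domain wall boundary conditions. -/
noncomputable def partitionFunction (w : Fin n → Fin n → VertexWeights R) : R :=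
  ∑ A ∈ asmSet n, asmWeight w A

lemma map_partitionFunction {S : Type*} [CommRing S] (f : R →+* S)
    (w : Fin n → Fin n → VertexWeights R) :
    f (partitionFunction w) = partitionFunction fun i j => (w i j).map f := by
  simp only [partitionFunction, asmWeight, map_sum, map_prod, VertexWeights.map_onEdges]

lemma sum_asmSet_transpose {M : Type*} [AddCommMonoid M] (F : (Fin n → Fin n → ℤ) → M) :
    ∑ A ∈ asmSet n, F (fun i j => A j i) = ∑ A ∈ asmSet n, F A :=
  sum_nbij' (fun A i j => A j i) (fun A i j => A j i)
    (fun _ hA => mem_asmSet.2 (mem_asmSet.1 hA).transpose)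
    (fun _ hA => mem_asmSet.2 (mem_asmSet.1 hA).transpose)
    (fun _ _ => rfl) (fun _ _ => rfl) (fun _ _ => rfl)

lemma partitionFunction_transpose (w : Fin n → Fin n → VertexWeights R) :
    partitionFunction (fun i j => w j i) = partitionFunction w := by
  rw [partitionFunction, partitionFunction, ← sum_asmSet_transpose]
  refine sum_congr rfl fun A _ => prod_comm.trans ?_
  exact prod_congr rfl fun i _ => prod_congr rfl fun j _ => VertexWeights.onEdges_swap ..

end SixVertex

section Statistics

namespace IsASM

variable {n : ℕ} {A : Fin n → Fin n → ℤ}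

lemma rowSum_eq (hA : IsASM A) (i : Fin n) (j : Fin (n + 1)) :
    rowSum A i j = (rowEdge A i j).toNat := by
  rcases (isASM_iff.1 hA).1 i j with h | h <;> simp [rowEdge, h]

lemma colSum_eq (hA : IsASM A) (j : Fin n) (i : Fin (n + 1)) :
    colSum A j i = (colEdge A j i).toNat := by
  rcases (isASM_iff.1 hA).2.1 j i with h | h <;> simp [colEdge, h]

lemma vertex_cases (hA : IsASM A) (i j : Fin n) :
    A i j = 1 ∧ rowEdge A i j.castSucc = false ∧ colEdge A j i.castSucc = false ∧
        rowEdge A i j.succ = true ∧ colEdge A j i.succ = true ∨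
      A i j = -1 ∧ rowEdge A i j.castSucc = true ∧ colEdge A j i.castSucc = true ∧
        rowEdge A i j.succ = false ∧ colEdge A j i.succ = false ∨
      A i j = 0 ∧ rowEdge A i j.castSucc = rowEdge A i j.succ ∧
        colEdge A j i.castSucc = colEdge A j i.succ := by
  have hrow := rowSum_succ A i j
  have hcol := colSum_succ A i j
  rw [hA.rowSum_eq, hA.rowSum_eq] at hrow
  rw [hA.colSum_eq, hA.colSum_eq] at hcol
  revert hrow hcol
  generalize A i j = a
  cases rowEdge A i j.castSucc <;> cases rowEdge A i j.succ <;>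
    cases colEdge A j i.castSucc <;> cases colEdge A j i.succ <;> simp <;> omega

lemma onEdges_eq_mul {R : Type*} [CommRing R] (hA : IsASM A) (i j : Fin n) (x z y : R) :
    VertexWeights.onEdges ⟨x, z, 1, y⟩ (rowEdge A i j.castSucc) (colEdge A j i.castSucc)
        (rowEdge A i j.succ) (colEdge A j i.succ) =
      (if rowEdge A i j.succ = true ∧ colEdge A j i.castSucc = true then x else 1) *
        (if A i j = -1 then y else 1) *
        (if rowEdge A i j.succ = false ∧ colEdge A j i.castSucc = false then z else 1) := by
  rcases hA.vertex_cases i j with ⟨ha, hl, ht, hr, hb⟩ | ⟨ha, hl, ht, hr, hb⟩ | ⟨ha, hr, hb⟩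
  · simp [ha, hl, ht, hr, hb, VertexWeights.onEdges]
  · simp [ha, hl, ht, hr, hb, VertexWeights.onEdges]
  · rw [ha, hr, hb]
    cases rowEdge A i j.succ <;> cases colEdge A j i.succ <;> simp [VertexWeights.onEdges]

lemma left_bottom_eq_false_iff (hA : IsASM A) (i j : Fin n) :
    colEdge A j i.succ = false ∧ rowEdge A i j.castSucc = false ↔
      rowEdge A i j.succ = false ∧ colEdge A j i.castSucc = false := by
  rcases hA.vertex_cases i j with ⟨-, hl, ht, hr, hb⟩ | ⟨-, hl, ht, hr, hb⟩ | ⟨-, hr, hb⟩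
  · simp [hl, ht, hr, hb]
  · simp [hl, ht, hr, hb]
  · rw [hr, hb, and_comm]

/-- Summing the inversions over the rows above and the columns to the left turns the defining
fourfold sum into a sum of products of a column sum and a row sum. -/
lemma nuASM_eq_card (hA : IsASM A) :
    nuASM A = #{q : Fin n × Fin n |
      rowEdge A q.1 q.2.succ = true ∧ colEdge A q.2 q.1.castSucc = true} := by
  have hsum : (∑ i : Fin n, ∑ i' : Fin n, ∑ j : Fin n, ∑ j' : Fin n,
      if i < i' ∧ j' ≤ j then A i j * A i' j' else 0) =
      ∑ i', ∑ j, colSum A j i'.castSucc * rowSum A i' j.succ := by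
    rw [sum_comm]
    refine sum_congr rfl fun i' _ => ?_
    rw [sum_comm]
    refine sum_congr rfl fun j _ => ?_
    rw [colSum, partialSum_castSucc_eq_sum_filter, rowSum, partialSum_succ_eq_sum_filter,
      sum_filter, sum_filter, sum_mul_sum]
    refine sum_congr rfl fun i _ => sum_congr rfl fun j' _ => ?_
    rw [ite_zero_mul_ite_zero]
  rw [nuASM, hsum, card_filter, Fintype.sum_prod_type, ← Int.toNat_natCast (∑ i, _)]
  push_cast
  simp only [hA.rowSum_eq, hA.colSum_eq]
  congr 1
  refine sum_congr rfl fun i _ => sum_congr rfl fun j _ => ?_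
  cases rowEdge A i j.succ <;> cases colEdge A j i.castSucc <;> simp

lemma rowEdge_zero_succ_eq_false_iff {A : Fin (n + 1) → Fin (n + 1) → ℤ} (hA : IsASM A)
    (j : Fin (n + 1)) :
    rowEdge A 0 j.succ = false ↔ A 0 j = 0 ∧ ∃ k, j < k ∧ A 0 k = 1 := by
  have hrow : rowEdge A 0 j.succ = false ↔ rowSum A 0 j.succ = 0 := by
    rw [hA.rowSum_eq]
    cases rowEdge A 0 j.succ <;> simp
  have hleft := hA.rowSum_eq 0 j.castSucc
  have hright := hA.rowSum_eq 0 j.succ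
  have hstep := rowSum_succ A 0 j
  have hj := hA.zero_row j
  have htotal : rowSum A 0 j.succ + ∑ k with j < k, A 0 k = 1 := by
    simp only [rowSum, partialSum_succ_eq_sum_filter, ← not_le, sum_filter_add_sum_filter_not]
    exact hA.2.2.2.1 0
  rw [hrow]
  constructor
  · intro hzero
    obtain ⟨k, hk, hk₀⟩ : ∃ k ∈ ({k | j < k} : Finset (Fin (n + 1))), A 0 k ≠ 0 :=
      exists_ne_zero_of_sum_ne_zero (by omega)
    exact ⟨by omega, k, (mem_filter.1 hk).2, (hA.zero_row k).resolve_left hk₀⟩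
  · rintro ⟨-, k, hjk, hk⟩
    have hle : A 0 k ≤ ∑ k with j < k, A 0 k :=
      single_le_sum (fun l _ => by rcases hA.zero_row l with h | h <;> simp [h])
        (by simpa using hjk)
    omega

lemma rhoT_eq_card {A : Fin (n + 1) → Fin (n + 1) → ℤ} (hA : IsASM A) :
    rhoT A = #{j | rowEdge A 0 j.succ = false ∧ colEdge A j 0 = false} := by
  have hcol (j) : colEdge A j 0 = false := by simp [colEdge]
  simp only [hA.rowEdge_zero_succ_eq_false_iff, hcol, and_true]
  rfl

lemma rhoL_eq_card {A : Fin (n + 1) → Fin (n + 1) → ℤ} (hA : IsASM A) :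
    rhoL A = #{i | rowEdge A i (Fin.succ 0) = false ∧ colEdge A 0 i.castSucc = false} := by
  simp only [← hA.left_bottom_eq_false_iff]
  exact hA.transpose.rhoT_eq_card

end IsASM

variable {R : Type*} [CommRing R] {n : ℕ}

/-- The weights marking the zeros of the first row by `z1` and of the first column by `z2`. -/
def edgeMark (z1 z2 : R) (i j : Fin (n + 1)) : R :=
  (if i = 0 then z1 else 1) * if j = 0 then z2 else 1

lemma prod_ite_edgeMark (z1 z2 : R) (P : Fin (n + 1) → Fin (n + 1) → Prop)
    [∀ i j, Decidable (P i j)] :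
    ∏ i, ∏ j, (if P i j then edgeMark z1 z2 i j else 1) =
      z1 ^ #{j | P 0 j} * z2 ^ #{i | P i 0} := by
  have hsplit (i j) : (if P i j then edgeMark z1 z2 i j else 1) =
      (if i = 0 then if P 0 j then z1 else 1 else 1) *
        if j = 0 then if P i 0 then z2 else 1 else 1 := by
    rw [edgeMark]
    grind
  simp only [hsplit, prod_mul_distrib]
  rw [prod_comm]
  simp [prod_ite_eq', prod_ite]

lemma prod_prod_ite_one (P : Fin n → Fin n → Prop) [∀ i j, Decidable (P i j)] (x : R) :
    ∏ i, ∏ j, (if P i j then x else 1) = x ^ #{q : Fin n × Fin n | P q.1 q.2} := by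
  rw [← Fintype.prod_prod_type', prod_ite, prod_const, prod_const_one, mul_one]

lemma IsASM.asmWeight_edgeMark {A : Fin (n + 1) → Fin (n + 1) → ℤ} (hA : IsASM A)
    (x y z1 z2 : R) :
    asmWeight (fun i j => ⟨x, edgeMark z1 z2 i j, 1, y⟩) A =
      x ^ nuASM A * y ^ muASM A * z1 ^ rhoT A * z2 ^ rhoL A := by
  simp only [asmWeight, hA.onEdges_eq_mul, prod_mul_distrib, prod_ite_edgeMark,
    prod_prod_ite_one]
  rw [hA.nuASM_eq_card, muASM, hA.rhoT_eq_card, hA.rhoL_eq_card, ← mul_assoc]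
  rfl

lemma Zadj_eq_partitionFunction (x y z1 z2 : R) :
    Zadj (n + 1) x y z1 z2 =
      partitionFunction fun i j : Fin (n + 1) => ⟨x, edgeMark z1 z2 i j, 1, y⟩ := by
  rw [Zadj, Zqua_eq_sum_asmSet]
  refine sum_congr rfl fun A hA => ?_
  rw [(mem_asmSet.1 hA).asmWeight_edgeMark, one_pow, one_pow, mul_one, mul_one]

lemma Zun_eq_partitionFunction (x y : R) :
    Zun n x y = partitionFunction fun _ _ : Fin n => ⟨x, 1, 1, y⟩ := by
  cases n with
  | zero =>
    rw [Zun, Zqua_eq_sum_asmSet]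
    exact sum_congr rfl fun A _ => by simp [nuASM, muASM, asmWeight]
  | succ n =>
    refine (Zadj_eq_partitionFunction x y 1 1).trans ?_
    simp [edgeMark]

lemma Zadj_comm (x y z1 z2 : R) : Zadj (n + 1) x y z1 z2 = Zadj (n + 1) x y z2 z1 := by
  rw [Zadj_eq_partitionFunction, Zadj_eq_partitionFunction, ← partitionFunction_transpose]
  simp only [edgeMark, mul_comm]

lemma Zadj_one_left (x y z : R) : Zadj (n + 1) x y 1 z = Zsing (n + 1) x y z :=
  Zadj_comm x y 1 z

lemma IsASM.sum_rowSum {A : Fin n → Fin n → ℤ} (hA : IsASM A) (j : Fin (n + 1)) :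
    ∑ i, rowSum A i j = j := by
  induction j using Fin.induction with
  | zero => simp
  | succ j ih => simp [rowSum_succ, sum_add_distrib, ih, hA.2.2.2.2 j]

/-- Adding the indicators of the right and the top edges over all vertices gives `n²`. -/
lemma IsASM.card_a₁_eq_card_a₀ {A : Fin n → Fin n → ℤ} (hA : IsASM A) :
    #{q : Fin n × Fin n | rowEdge A q.1 q.2.succ = true ∧ colEdge A q.2 q.1.castSucc = true} =
      #{q : Fin n × Fin n |
        rowEdge A q.1 q.2.succ = false ∧ colEdge A q.2 q.1.castSucc = false} := by
  have hcell (i j) : (if rowEdge A i j.succ = true ∧ colEdge A j i.castSucc = true then 1 else 0) -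
      (if rowEdge A i j.succ = false ∧ colEdge A j i.castSucc = false then 1 else 0) =
        rowSum A i j.succ + colSum A j i.castSucc - 1 := by
    rw [hA.rowSum_eq, hA.colSum_eq]
    cases rowEdge A i j.succ <;> cases colEdge A j i.castSucc <;> simp
  have hrow : ∑ i, ∑ j : Fin n, rowSum A i j.succ = ∑ j : Fin n, (j + 1 : ℤ) := by
    rw [sum_comm]
    simp [hA.sum_rowSum]
  have hcol : ∑ i : Fin n, ∑ j, colSum A j i.castSucc = ∑ j : Fin n, (j : ℤ) :=
    sum_congr rfl fun i _ => hA.transpose.sum_rowSum i.castSucc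
  have hgauss : ∑ j : Fin n, (j + 1 : ℤ) + ∑ j : Fin n, (j : ℤ) = ∑ _ : Fin n, (n : ℤ) := by
    rw [← Equiv.sum_comp Fin.revPerm, ← sum_add_distrib]
    refine sum_congr rfl fun j _ => ?_
    rw [Fin.revPerm_apply, Fin.val_rev]
    omega
  rw [card_filter, card_filter, ← Nat.cast_inj (R := ℤ), ← sub_eq_zero, Fintype.sum_prod_type,
    Fintype.sum_prod_type]
  push_cast
  simp only [← sum_sub_distrib, hcell]
  simp only [sum_sub_distrib, sum_add_distrib]
  rw [hrow, hcol, hgauss]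
  simp

end Statistics

section Border

open Matrix (vecCons)

/-- The matrix `B` bordered by a first row and a first column `(1, 0, …, 0)`. -/
def borderOne {n : ℕ} (B : Fin n → Fin n → ℤ) : Fin (n + 1) → Fin (n + 1) → ℤ :=
  vecCons (vecCons 1 0) fun i => vecCons 0 (B i)

variable {n : ℕ}

lemma rowEdge_zero (A : Fin n → Fin n → ℤ) (i : Fin n) : rowEdge A i 0 = false := by
  simp [rowEdge]

lemma colEdge_zero (A : Fin n → Fin n → ℤ) (j : Fin n) : colEdge A j 0 = false := by
  simp [colEdge]

lemma rowEdge_succ_zero_eq_false {A : Fin (n + 1) → Fin (n + 1) → ℤ} {i : Fin (n + 1)}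
    (h : A i 0 = 0) : rowEdge A i (Fin.succ 0) = false := by
  rw [rowEdge, rowSum_succ, h, Fin.castSucc_zero, rowSum_zero]
  rfl

lemma onEdges_corner {R : Type*} [CommRing R] {A : Fin (n + 1) → Fin (n + 1) → ℤ}
    (h : A 0 0 = 0) (w : VertexWeights R) :
    w.onEdges (rowEdge A 0 0) (colEdge A 0 0) (rowEdge A 0 (Fin.succ 0))
      (colEdge A 0 (Fin.succ 0)) = w.a₀ := by
  have hbottom : colEdge A 0 (Fin.succ 0) = false :=
    rowEdge_succ_zero_eq_false (A := fun i j => A j i) h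
  rw [rowEdge_succ_zero_eq_false h, hbottom, rowEdge_zero, colEdge_zero]
  rfl

lemma borderOne_transpose (B : Fin n → Fin n → ℤ) :
    (fun i j => borderOne B j i) = borderOne fun i j => B j i := by
  funext i j
  cases i using Fin.cases <;> cases j using Fin.cases <;> simp [borderOne]

lemma rowSum_borderOne_zero (B : Fin n → Fin n → ℤ) (j : Fin (n + 1)) :
    rowSum (borderOne B) 0 j.succ = 1 := by
  rw [rowSum, Fin.partialSum_succ', partialSum_eq_sum_filter]
  simp [borderOne, Fin.tail]

lemma rowSum_borderOne_succ (B : Fin n → Fin n → ℤ) (i : Fin n) (j : Fin (n + 1)) :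
    rowSum (borderOne B) i.succ j.succ = rowSum B i j := by
  rw [rowSum, Fin.partialSum_succ']
  simp [borderOne, rowSum, Fin.tail_def]

lemma colSum_borderOne_zero (B : Fin n → Fin n → ℤ) (i : Fin (n + 1)) :
    colSum (borderOne B) 0 i.succ = 1 :=
  (congrArg (rowSum · 0 i.succ) (borderOne_transpose B)).trans (rowSum_borderOne_zero _ i)

lemma colSum_borderOne_succ (B : Fin n → Fin n → ℤ) (j : Fin n) (i : Fin (n + 1)) :
    colSum (borderOne B) j.succ i.succ = colSum B j i :=
  (congrArg (rowSum · j.succ i.succ) (borderOne_transpose B)).trans (rowSum_borderOne_succ _ j i)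

lemma isASM_borderOne {B : Fin n → Fin n → ℤ} : IsASM (borderOne B) ↔ IsASM B := by
  rw [isASM_iff, isASM_iff]
  simp only [Fin.forall_fin_succ, ← Fin.succ_last, rowSum_borderOne_zero, rowSum_borderOne_succ,
    colSum_borderOne_zero, colSum_borderOne_succ]
  simp

lemma IsASM.eq_borderOne {A : Fin (n + 1) → Fin (n + 1) → ℤ} (hA : IsASM A) (h : A 0 0 = 1) :
    A = borderOne fun i j => A i.succ j.succ := by
  have hrow {A : Fin (n + 1) → Fin (n + 1) → ℤ} (hA : IsASM A) (h : A 0 0 = 1) (j : Fin n) :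
      A 0 j.succ = 0 := by
    have hsum := hA.2.2.2.1 0
    rw [Fin.sum_univ_succ, h, add_eq_left,
      sum_eq_zero_iff_of_nonneg (fun j _ => by have := hA.zero_row j.succ; omega)] at hsum
    exact hsum j (mem_univ _)
  funext i j
  cases i using Fin.cases <;> cases j using Fin.cases <;>
    simp [borderOne, h, hrow hA h, hrow hA.transpose h]

variable {R : Type*} [CommRing R]

lemma asmWeight_borderOne (w : Fin (n + 1) → Fin (n + 1) → VertexWeights R)
    (B : Fin n → Fin n → ℤ) :
    asmWeight w (borderOne B) = (∏ i : Fin n, (w i.succ 0).b) * (∏ j : Fin n, (w 0 j.succ).b) *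
      asmWeight (fun i j => w i.succ j.succ) B := by
  simp only [asmWeight, Fin.prod_univ_succ, prod_mul_distrib, Fin.castSucc_zero,
    ← Fin.succ_castSucc, rowEdge, colEdge, rowSum_zero, colSum_zero, rowSum_borderOne_zero,
    rowSum_borderOne_succ, colSum_borderOne_zero, colSum_borderOne_succ]
  simp [VertexWeights.onEdges, mul_assoc]

lemma sum_asmSet_filter_eq_one {M : Type*} [AddCommMonoid M]
    (F : (Fin (n + 1) → Fin (n + 1) → ℤ) → M) :
    ∑ A ∈ asmSet (n + 1) with A 0 0 = 1, F A = ∑ B ∈ asmSet n, F (borderOne B) := by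
  have hborder {A} (hA : A ∈ {A ∈ asmSet (n + 1) | A 0 0 = 1}) :
      A = borderOne fun i j => A i.succ j.succ := by
    rw [mem_filter, mem_asmSet] at hA
    exact hA.1.eq_borderOne hA.2
  refine sum_nbij' (fun A i j => A i.succ j.succ) borderOne (fun A hA => ?_) (fun B hB => ?_)
    (fun A hA => (hborder hA).symm) (fun B _ => rfl) fun A hA => congrArg F (hborder hA)
  · rw [mem_asmSet, ← isASM_borderOne, ← hborder hA]
    exact mem_asmSet.1 (mem_filter.1 hA).1
  · rw [mem_filter, mem_asmSet, isASM_borderOne, ← mem_asmSet]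
    exact ⟨hB, rfl⟩

/-- The alternating sign matrices with a `1` in the top left corner are those of size `n`,
bordered. -/
lemma partitionFunction_eq_border_add (w : Fin (n + 1) → Fin (n + 1) → VertexWeights R) :
    partitionFunction w = (∏ i : Fin n, (w i.succ 0).b) * (∏ j : Fin n, (w 0 j.succ).b) *
        partitionFunction (fun i j => w i.succ j.succ) +
      ∑ A ∈ asmSet (n + 1) with A 0 0 = 0, asmWeight w A := by
  have hcorner : {A ∈ asmSet (n + 1) | ¬ A 0 0 = 1} = {A ∈ asmSet (n + 1) | A 0 0 = 0} :=
    filter_congr fun A hA => by have := (mem_asmSet.1 hA).zero_row 0; omega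
  rw [partitionFunction, ← sum_filter_add_sum_filter_not _ (fun A => A 0 0 = 1), hcorner,
    sum_asmSet_filter_eq_one, partitionFunction, mul_sum]
  simp only [asmWeight_borderOne]

end Border

section NoncommutativeProducts

/-- The paths of `m` steps from `a` to `b` through the states `S`. -/
def paths {S : Type*} [Fintype S] [DecidableEq S] (m : ℕ) (a b : S) : Finset (Fin (m + 1) → S) :=
  {P | P 0 = a ∧ P (Fin.last m) = b}

lemma mem_paths {S : Type*} [Fintype S] [DecidableEq S] {m : ℕ} {a b : S} {P : Fin (m + 1) → S} :
    P ∈ paths m a b ↔ P 0 = a ∧ P (Fin.last m) = b := by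
  simp only [paths, mem_filter, mem_univ, true_and]

lemma sum_paths_succ {S M : Type*} [Fintype S] [DecidableEq S] [AddCommMonoid M] {m : ℕ} (a b : S)
    (F : (Fin (m + 2) → S) → M) :
    ∑ P ∈ paths (m + 1) a b, F P = ∑ c, ∑ P ∈ paths m c b, F (Matrix.vecCons a P) := by
  simp only [paths, sum_filter]
  rw [← (Fin.consEquiv fun _ => S).sum_comp, Fintype.sum_prod_type, sum_comm,
    sum_comm (s := univ (α := S))]
  simp [Fin.consEquiv, Matrix.vecCons, ite_and, ← Fin.succ_last]

lemma list_prod_ofFn_apply {S R : Type*} [Fintype S] [DecidableEq S] [CommSemiring R] {m : ℕ}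
    (T : Fin m → Matrix S S R) (a b : S) :
    (List.ofFn T).prod a b = ∑ P ∈ paths m a b, ∏ k, T k (P k.castSucc) (P k.succ) := by
  induction m generalizing a with
  | zero =>
    simp only [paths, sum_filter]
    rw [← (Equiv.funUnique (Fin 1) S).symm.sum_comp]
    simp [Matrix.one_apply, ite_and]
  | succ m ih =>
    simp only [List.ofFn_succ, List.prod_cons, Matrix.mul_apply, ih, sum_paths_succ, mul_sum,
      Fin.prod_univ_succ, ← Fin.succ_castSucc]
    refine sum_congr rfl fun c _ => sum_congr rfl fun P hP => ?_
    simp [(mem_paths.1 hP).1]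

lemma sum_list_prod_ofFn {S R : Type*} [Fintype S] [Semiring R] {n : ℕ} (M : Fin n → S → R) :
    ∑ k : Fin n → S, (List.ofFn fun i => M i (k i)).prod =
      (List.ofFn fun i => ∑ s, M i s).prod := by
  induction n with
  | zero => simp
  | succ n ih =>
    rw [← (Fin.consEquiv fun _ => S).sum_comp, Fintype.sum_prod_type]
    simp [Fin.consEquiv, ← ih, sum_mul_sum]

open scoped Kronecker in
lemma list_prod_ofFn_kronecker {S R : Type*} [Fintype S] [DecidableEq S] [CommSemiring R] {n : ℕ}
    (A B : Fin n → Matrix S S R) :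
    (List.ofFn A).prod ⊗ₖ (List.ofFn B).prod = (List.ofFn fun i => A i ⊗ₖ B i).prod := by
  induction n with
  | zero => simp
  | succ n ih => simp [Matrix.mul_kronecker_mul, ih]

lemma semiconjBy_list_prod_ofFn {M : Type*} [Monoid M] {a : M} {n : ℕ} {x y : Fin n → M}
    (h : ∀ i, SemiconjBy a (x i) (y i)) :
    SemiconjBy a (List.ofFn x).prod (List.ofFn y).prod := by
  induction n with
  | zero => simp
  | succ n ih =>
    simp only [List.ofFn_succ, List.prod_cons]
    exact (h 0).mul_right (ih fun i => h i.succ)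

lemma list_prod_ofFn_comp_perm {M : Type*} [Monoid M] {n : ℕ} (x : Fin n → M)
    (h : ∀ i j, Commute (x i) (x j)) (σ : Equiv.Perm (Fin n)) :
    (List.ofFn (x ∘ σ)).prod = (List.ofFn x).prod := by
  refine (σ.ofFn_comp_perm x).prod_eq' ?_
  exact List.pairwise_ofFn.2 fun i j _ => h _ _

end NoncommutativeProducts

section TransferMatrix

variable {R : Type*} [CommRing R] {n : ℕ}

/-- The matrix, in the states of the vertical edges, of a vertex with left edge `l` and right
edge `r`. -/
def VertexWeights.transferMatrix (w : VertexWeights R) (l r : Bool) : Matrix Bool Bool R :=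
  .of fun t b => w.onEdges l t r b

/-- The matrix, in the states of the horizontal edges, of a column whose top and bottom edges
satisfy the domain wall boundary condition. -/
def columnTransfer (w : Fin n → VertexWeights R) : Matrix (Fin n → Bool) (Fin n → Bool) R :=
  .of fun h h' => (List.ofFn fun i => (w i).transferMatrix (h i) (h' i)).prod false true

lemma prod_columnTransfer_apply (w : Fin n → Fin n → VertexWeights R) (h h' : Fin n → Bool) :
    (List.ofFn fun j => columnTransfer fun i => w i j).prod h h' =
      ∑ q ∈ paths n h h' ×ˢ Fintype.piFinset fun _ => paths n false true,
        ∏ i, ∏ j, (w i j).onEdges (q.1 j.castSucc i) (q.2 j i.castSucc) (q.1 j.succ i)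
          (q.2 j i.succ) := by
  simp only [list_prod_ofFn_apply, columnTransfer, VertexWeights.transferMatrix, Matrix.of_apply,
    prod_univ_sum, sum_product]
  exact sum_congr rfl fun _ _ => sum_congr rfl fun _ _ => prod_comm

lemma IsASM.rowEdge_last {A : Fin n → Fin n → ℤ} (hA : IsASM A) (i : Fin n) :
    rowEdge A i (Fin.last n) = true := by
  simp [rowEdge, (isASM_iff.1 hA).2.2.1 i]

lemma IsASM.eq_sub {A : Fin n → Fin n → ℤ} (hA : IsASM A) (i j : Fin n) :
    A i j = (rowEdge A i j.succ).toNat - (rowEdge A i j.castSucc).toNat := by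
  rw [← hA.rowSum_eq, ← hA.rowSum_eq, rowSum_succ, add_sub_cancel_left]

lemma partialSum_sub_eq {n : ℕ} {c : Fin (n + 1) → ℤ} (hc : c 0 = 0) (j : Fin (n + 1)) :
    Fin.partialSum (fun k => c k.succ - c k.castSucc) j = c j := by
  induction j using Fin.induction with
  | zero => rw [Fin.partialSum_zero, hc]
  | succ j ih => rw [Fin.partialSum_succ, ih, add_sub_cancel]

/-- The matrix consists of the differences of the horizontal edges, which by the ice rule are those
of the vertical edges. -/
lemma exists_isASM_of_prod_onEdges_ne_zero {w : Fin n → Fin n → VertexWeights R}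
    {H : Fin (n + 1) → Fin n → Bool} {V : Fin n → Fin (n + 1) → Bool}
    (hH : H ∈ paths n (fun _ => false) fun _ => true) (hV : ∀ j, V j ∈ paths n false true)
    (hw : ∏ i, ∏ j, (w i j).onEdges (H j.castSucc i) (V j i.castSucc) (H j.succ i)
      (V j i.succ) ≠ 0) :
    ∃ A, IsASM A ∧ (fun j i => rowEdge A i j) = H ∧ colEdge A = V := by
  simp only [mem_paths, funext_iff] at hH hV
  let A (i j : Fin n) : ℤ := (H j.succ i).toNat - (H j.castSucc i).toNat
  have hrow (i j) : rowSum A i j = (H j i).toNat :=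
    partialSum_sub_eq (c := fun j => ((H j i).toNat : ℤ)) (by simp [hH.1 i]) j
  have hcol (j i) : colSum A j i = (V j i).toNat := by
    have hA (i) : A i j = (V j i.succ).toNat - (V j i.castSucc).toNat :=
      VertexWeights.right_sub_left_eq_of_onEdges_ne_zero fun hzero =>
        hw (prod_eq_zero (mem_univ i) (prod_eq_zero (mem_univ j) hzero))
    simp only [colSum, hA]
    exact partialSum_sub_eq (c := fun i => ((V j i).toNat : ℤ)) (by simp [(hV j).1]) i
  have htoNat (b : Bool) : (b.toNat : ℤ) = 0 ∨ (b.toNat : ℤ) = 1 := by cases b <;> simp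
  have hdecide (b : Bool) : decide ((b.toNat : ℤ) = 1) = b := by cases b <;> rfl
  refine ⟨A, isASM_iff.2 ⟨fun i j => ?_, fun j i => ?_, fun i => ?_, fun j => ?_⟩, ?_, ?_⟩
  · exact hrow i j ▸ htoNat _
  · exact hcol j i ▸ htoNat _
  · rw [hrow, hH.2 i]; rfl
  · rw [hcol, (hV j).2]; rfl
  · funext j i
    rw [rowEdge, hrow, hdecide]
  · funext j i
    rw [colEdge, hcol, hdecide]

theorem partitionFunction_eq_prod_columnTransfer (w : Fin n → Fin n → VertexWeights R) :
    partitionFunction w =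
      (List.ofFn fun j => columnTransfer fun i => w i j).prod (fun _ => false) fun _ => true := by
  rw [prod_columnTransfer_apply]
  refine sum_of_injOn (fun A => (fun j i => rowEdge A i j, colEdge A)) ?_ ?_ ?_ fun _ _ => rfl
  · intro A hA B hB hAB
    have hA' := mem_asmSet.1 hA
    have hB' := mem_asmSet.1 hB
    funext i j
    have hedge (j) : rowEdge A i j = rowEdge B i j := congrFun (congrFun (Prod.ext_iff.1 hAB).1 j) i
    rw [hA'.eq_sub, hB'.eq_sub, hedge, hedge]
  · intro A hA
    have hA' := mem_asmSet.1 hA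
    simp only [coe_product, Set.mem_prod, mem_coe, Fintype.mem_piFinset, mem_paths, funext_iff]
    exact ⟨⟨rowEdge_zero A, hA'.rowEdge_last⟩, fun j => ⟨colEdge_zero A j,
      hA'.transpose.rowEdge_last j⟩⟩
  · rintro ⟨H, V⟩ hHV hnot
    rw [mem_product, Fintype.mem_piFinset] at hHV
    by_contra hw
    obtain ⟨A, hA, hH, hV⟩ := exists_isASM_of_prod_onEdges_ne_zero hHV.1 hHV.2 hw
    exact hnot ⟨A, mem_asmSet.2 hA, Prod.ext hH hV⟩

end TransferMatrix

section YangBaxter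

open scoped Kronecker

variable {R : Type*} [CommRing R] {n : ℕ}

/-- The integrable six-vertex weights with row parameter `u`, column parameter `v` and crossing
parameter `p`. -/
def spectralWeights (p u v : R) : VertexWeights R :=
  ⟨p * (u - v), u - v, p * u - v, (p - 1) ^ 2 * u * v⟩

/-- The weights intertwining two columns with parameters `v` and `w` in the Yang–Baxter equation. -/
def crossWeight (p v w : R) : Bool → Bool → Bool → Bool → R
  | false, false, false, false => p * w - v
  | true, true, true, true => p * w - v
  | false, true, false, true => (p - 1) * v
  | true, false, true, false => (p - 1) * w
  | false, true, true, false => p * (w - v)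
  | true, false, false, true => w - v
  | _, _, _, _ => 0

theorem yangBaxter (p u v w : R) (l r : Bool) :
    SemiconjBy (.of fun t b : Bool × Bool => crossWeight p v w t.1 t.2 b.1 b.2)
      (∑ k, (spectralWeights p u v).transferMatrix l k ⊗ₖ
        (spectralWeights p u w).transferMatrix k r)
      (∑ k, (spectralWeights p u w).transferMatrix l k ⊗ₖ
        (spectralWeights p u v).transferMatrix k r) := by
  ext ⟨t, t'⟩ ⟨b, b'⟩
  simp only [Matrix.mul_apply, Fintype.sum_prod_type, Matrix.add_apply, Matrix.kroneckerMap_apply,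
    VertexWeights.transferMatrix, Matrix.of_apply, Fintype.sum_bool]
  cases l <;> cases r <;> cases t <;> cases t' <;> cases b <;> cases b' <;>
    simp only [VertexWeights.onEdges, spectralWeights, crossWeight] <;> ring

/-- Multiply the Yang–Baxter equations of all rows and read off the entry at the domain wall
boundary. -/
theorem commute_columnTransfer [IsDomain R] (p : R) (u : Fin n → R) {v w : R}
    (hvw : p * w - v ≠ 0) :
    Commute (columnTransfer fun i => spectralWeights p (u i) v)
      (columnTransfer fun i => spectralWeights p (u i) w) := by
  have hmul (v w : R) (h h' : Fin n → Bool) :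
      ((columnTransfer fun i => spectralWeights p (u i) v) *
        columnTransfer fun i => spectralWeights p (u i) w) h h' =
      (List.ofFn fun i => ∑ k, (spectralWeights p (u i) v).transferMatrix (h i) k ⊗ₖ
        (spectralWeights p (u i) w).transferMatrix k (h' i)).prod (false, false) (true, true) := by
    rw [← sum_list_prod_ofFn (fun i k => (spectralWeights p (u i) v).transferMatrix (h i) k ⊗ₖ
        (spectralWeights p (u i) w).transferMatrix k (h' i)), Matrix.sum_apply]
    simp only [← list_prod_ofFn_kronecker]
    rfl
  ext h h'
  have hcross := semiconjBy_list_prod_ofFn fun i => yangBaxter p (u i) v w (h i) (h' i)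
  have hentry := congrFun (congrFun hcross.eq (false, false)) (true, true)
  simp only [Matrix.mul_apply, Fintype.sum_prod_type, Fintype.sum_bool, crossWeight,
    Matrix.of_apply, zero_mul, mul_zero, add_zero, zero_add] at hentry
  simp only [hmul, Fintype.sum_bool]
  exact mul_left_cancel₀ hvw (hentry.trans (mul_comm _ _))

end YangBaxter

section DomainWall

variable {R S : Type*} [CommRing R] [CommRing S] {n : ℕ}

/-- The partition function of the inhomogeneous six-vertex model with domain wall boundary
conditions, with row parameters `u` and column parameters `v`. -/
noncomputable def dwbc (p : R) (u v : Fin n → R) : R :=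
  partitionFunction fun i j => spectralWeights p (u i) (v j)

lemma dwbc_zero (p : R) (u v : Fin 0 → R) : dwbc p u v = 1 := by
  have hasm : asmSet 0 = {0} := by
    refine eq_singleton_iff_unique_mem.2 ⟨mem_asmSet.2 (isASM_iff.2 ?_), fun _ _ =>
      Subsingleton.elim _ _⟩
    simp
  simp [dwbc, partitionFunction, asmWeight, hasm]

lemma map_dwbc (f : R →+* S) (p : R) (u v : Fin n → R) :
    f (dwbc p u v) = dwbc (f p) (f ∘ u) (f ∘ v) := by
  simp [dwbc, map_partitionFunction, VertexWeights.map, spectralWeights]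

theorem dwbc_comp_perm [IsDomain R] (p : R) (u v : Fin n → R) (σ : Equiv.Perm (Fin n))
    (hv : ∀ i j, p * v i - v j ≠ 0) : dwbc p u (v ∘ σ) = dwbc p u v := by
  have hcomm (i j : Fin n) : Commute (columnTransfer fun k => spectralWeights p (u k) (v i))
      (columnTransfer fun k => spectralWeights p (u k) (v j)) :=
    commute_columnTransfer p u (hv j i)
  rw [dwbc, dwbc, partitionFunction_eq_prod_columnTransfer,
    partitionFunction_eq_prod_columnTransfer, ← list_prod_ofFn_comp_perm _ hcomm σ]
  rfl

lemma dwbc_vecCons_vecCons_self (p r : R) (u v : Fin n → R) :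
    dwbc p (Matrix.vecCons r u) (Matrix.vecCons r v) =
      (∏ k, (p * r - v k)) * (∏ i, (p * u i - r)) * dwbc p u v := by
  have hcorner : ∑ A ∈ asmSet (n + 1) with A 0 0 = 0, asmWeight (fun i j =>
      spectralWeights p (Matrix.vecCons r u i) (Matrix.vecCons r v j)) A = 0 := by
    refine sum_eq_zero fun A hA => ?_
    refine prod_eq_zero (mem_univ 0) (prod_eq_zero (mem_univ 0) ?_)
    exact (onEdges_corner (mem_filter.1 hA).2 _).trans (sub_self r)
  rw [dwbc, partitionFunction_eq_border_add, hcorner, add_zero, mul_comm (∏ _, _)]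
  rfl

lemma comp_cycleRange_symm {α : Type*} (v : Fin (n + 1) → α) (j : Fin (n + 1)) :
    v ∘ j.cycleRange.symm = Matrix.vecCons (v j) (v ∘ j.succAbove) := by
  funext k
  cases k using Fin.cases <;> simp

theorem dwbc_vecCons_self [IsDomain R] (p : R) (u : Fin n → R) (v : Fin (n + 1) → R)
    (j : Fin (n + 1)) (hv : ∀ i k, p * v i - v k ≠ 0) :
    dwbc p (Matrix.vecCons (v j) u) v = (∏ k, (p * v j - v (j.succAbove k))) *
      (∏ i, (p * u i - v j)) * dwbc p u (v ∘ j.succAbove) := by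
  rw [← dwbc_comp_perm p _ v j.cycleRange.symm hv, comp_cycleRange_symm, dwbc_vecCons_vecCons_self]
  rfl

end DomainWall

section IzerginKorepin

open Polynomial

/-- The quadratic weight `(r - s) (p r - s)` of a row parameter `r` and a column parameter `s` in
the Izergin–Korepin determinant. -/
def pairWeight {R : Type*} [CommRing R] (p r s : R) : R := (r - s) * (p * r - s)

lemma det_vandermonde_vecCons {R : Type*} [CommRing R] {n : ℕ} (r : R) (u : Fin n → R) :
    (Matrix.vandermonde (Matrix.vecCons r u)).det =
      (∏ i, (u i - r)) * (Matrix.vandermonde u).det := by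
  simp [Matrix.det_vandermonde, Fin.prod_univ_succ]

lemma det_vandermonde_eq_succAbove {R : Type*} [CommRing R] {n : ℕ} (v : Fin (n + 1) → R)
    (j : Fin (n + 1)) :
    (Matrix.vandermonde v).det = (-1) ^ (j : ℕ) * (∏ k, (v (j.succAbove k) - v j)) *
      (Matrix.vandermonde (v ∘ j.succAbove)).det := by
  have hperm := Matrix.det_permute j.cycleRange.symm (Matrix.vandermonde v)
  have hsub : (Matrix.vandermonde v).submatrix j.cycleRange.symm id =
      Matrix.vandermonde (Matrix.vecCons (v j) (v ∘ j.succAbove)) := by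
    rw [← comp_cycleRange_symm]; rfl
  rw [hsub, det_vandermonde_vecCons, Equiv.Perm.sign_symm, Fin.sign_cycleRange] at hperm
  simp only [Function.comp_apply] at hperm
  rw [mul_assoc, hperm]
  push_cast
  rw [← mul_assoc, ← mul_pow]
  simp

variable {K : Type*} [Field K] {n : ℕ} {p : K}

lemma natDegree_onEdges_add_le (p v : K) (l r b : Bool) :
    ((spectralWeights (C p) X (C v)).onEdges l false r b).natDegree + r.toNat ≤ 1 + l.toNat := by
  cases l <;> cases r <;> cases b <;>
    simp [VertexWeights.onEdges, spectralWeights,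
      (natDegree_C_mul_le p X).trans natDegree_X_le]

/-- The domain wall partition function as a polynomial in the first row parameter. -/
noncomputable def dwbcPolynomial (p : K) (u : Fin n → K) (v : Fin (n + 1) → K) : K[X] :=
  dwbc (C p) (Matrix.vecCons X (C ∘ u)) (C ∘ v)

lemma eval_dwbcPolynomial (p : K) (u : Fin n → K) (v : Fin (n + 1) → K) (r : K) :
    (dwbcPolynomial p u v).eval r = dwbc p (Matrix.vecCons r u) v := by
  have hrow : eval r ∘ (Matrix.vecCons X (C ∘ u)) = Matrix.vecCons r u := by
    funext i
    cases i using Fin.cases <;> simp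
  have hcol : eval r ∘ C ∘ v = v := by
    funext j
    simp
  rw [dwbcPolynomial, ← coe_evalRingHom, map_dwbc, coe_evalRingHom, hrow, hcol, eval_C]

/-- In the first row all the top edges are empty, and a vertex has degree one in the first row
parameter except where the horizontal edges change, which happens once. -/
lemma natDegree_dwbcPolynomial_le (p : K) (u : Fin n → K) (v : Fin (n + 1) → K) :
    (dwbcPolynomial p u v).natDegree ≤ n := by
  refine natDegree_sum_le_of_forall_le _ _ fun A hA => ?_
  have hA' := mem_asmSet.1 hA
  rw [asmWeight, Fin.prod_univ_succ]
  refine natDegree_mul_le.trans ((add_le_add (b := n) (d := 0) ?_ ?_).trans_eq (add_zero n))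
  · have hdeg := sum_le_sum fun j (_ : j ∈ univ) => natDegree_onEdges_add_le p (v j)
      (rowEdge A 0 j.castSucc) (rowEdge A 0 j.succ) (colEdge A j (0 : Fin (n + 1)).succ)
    have hedges := (Fin.sum_univ_succ fun j => (rowEdge A 0 j).toNat).symm.trans
      (Fin.sum_univ_castSucc fun j => (rowEdge A 0 j).toNat)
    simp only [sum_add_distrib, sum_const, card_univ, Fintype.card_fin, smul_eq_mul] at hdeg
    rw [rowEdge_zero, hA'.rowEdge_last, Bool.toNat_false, Bool.toNat_true] at hedges
    simp only [Fin.castSucc_zero, colEdge_zero]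
    refine (natDegree_prod_le _ _).trans (Nat.le_of_add_le_add_right (b := ∑ j : Fin (n + 1),
      (rowEdge A 0 j.succ).toNat) (hdeg.trans_eq ?_))
    omega
  · refine (natDegree_prod_le _ _).trans (sum_nonpos fun i _ => ?_)
    refine (natDegree_prod_le _ _).trans (sum_nonpos fun j _ => ?_)
    generalize rowEdge A i.succ _ = l, colEdge A j _ = t, rowEdge A _ _ = r, colEdge A _ _ = b
    cases l <;> cases t <;> cases r <;> cases b <;>
      simp only [VertexWeights.onEdges, spectralWeights, Matrix.cons_val_succ,
        Function.comp_apply] <;>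
      compute_degree

/-- The matrix of the Izergin–Korepin determinant. -/
def ikMatrix (p : K) (u v : Fin n → K) : Matrix (Fin n) (Fin n) K :=
  .of fun i j => (pairWeight p (u i) (v j))⁻¹

/-- The numerator of the Izergin–Korepin determinant, expanded along its first row, as a polynomial
in the first row parameter. -/
noncomputable def ikPolynomial (p : K) (u : Fin n → K) (v : Fin (n + 1) → K) : K[X] :=
  ∑ j : Fin (n + 1), C ((-1) ^ (j : ℕ) * (ikMatrix p u (v ∘ j.succAbove)).det) *
    ∏ k, pairWeight (C p) X (C (v (j.succAbove k)))

lemma eval_ikPolynomial (p : K) (u : Fin n → K) (v : Fin (n + 1) → K) (r : K) :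
    (ikPolynomial p u v).eval r = ∑ j : Fin (n + 1),
      (-1) ^ (j : ℕ) * (ikMatrix p u (v ∘ j.succAbove)).det *
        ∏ k, pairWeight p r (v (j.succAbove k)) := by
  simp [ikPolynomial, eval_finsetSum, eval_prod, pairWeight]

lemma eval_ikPolynomial_eq_det (u : Fin n → K) {v : Fin (n + 1) → K} {r : K}
    (hr : ∀ j, pairWeight p r (v j) ≠ 0) :
    (ikPolynomial p u v).eval r =
      (∏ j, pairWeight p r (v j)) * (ikMatrix p (Matrix.vecCons r u) v).det := by
  rw [eval_ikPolynomial, Matrix.det_succ_row_zero, mul_sum]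
  refine sum_congr rfl fun j _ => ?_
  have hminor : (ikMatrix p (Matrix.vecCons r u) v).submatrix Fin.succ j.succAbove =
      ikMatrix p u (v ∘ j.succAbove) := rfl
  have hentry : ikMatrix p (Matrix.vecCons r u) v 0 j = (pairWeight p r (v j))⁻¹ := rfl
  rw [hminor, hentry, Fin.prod_univ_succAbove _ j]
  field_simp [hr j]

lemma eval_ikPolynomial_col (p : K) (u : Fin n → K) (v : Fin (n + 1) → K) (j : Fin (n + 1)) :
    (ikPolynomial p u v).eval (v j) = (-1) ^ (j : ℕ) * (ikMatrix p u (v ∘ j.succAbove)).det *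
      ∏ k, pairWeight p (v j) (v (j.succAbove k)) := by
  rw [eval_ikPolynomial]
  refine sum_eq_single_of_mem j (mem_univ j) fun i _ hij => ?_
  obtain ⟨k, hk⟩ := Fin.exists_succAbove_eq hij.symm
  rw [prod_eq_zero (mem_univ k) (by simp [hk, pairWeight]), mul_zero]

lemma natDegree_ikPolynomial_le (p : K) (u : Fin n → K) (v : Fin (n + 1) → K) :
    (ikPolynomial p u v).natDegree ≤ 2 * n := by
  refine natDegree_sum_le_of_forall_le _ _ fun j _ => (natDegree_C_mul_le _ _).trans ?_
  refine (natDegree_prod_le _ _).trans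
    ((sum_le_card_nsmul _ _ 2 fun k _ => ?_).trans (by simp [mul_comm]))
  unfold pairWeight
  compute_degree

/-- Parameters in general position for the Izergin–Korepin determinant. -/
structure IsGeneric {m n : ℕ} (p : K) (u : Fin m → K) (v : Fin n → K) : Prop where
  row_injective : Function.Injective u
  col_injective : Function.Injective v
  pairWeight_ne_zero : ∀ i j, pairWeight p (u i) (v j) ≠ 0
  col_ne_zero : ∀ i j, p * v i - v j ≠ 0

lemma IsGeneric.comp {m n m' n' : ℕ} {u : Fin m → K} {v : Fin n → K} (h : IsGeneric p u v)
    {f : Fin m' → Fin m} {g : Fin n' → Fin n} (hf : Function.Injective f)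
    (hg : Function.Injective g) : IsGeneric p (u ∘ f) (v ∘ g) where
  row_injective := h.row_injective.comp hf
  col_injective := h.col_injective.comp hg
  pairWeight_ne_zero _ _ := h.pairWeight_ne_zero _ _
  col_ne_zero _ _ := h.col_ne_zero _ _

lemma eval_dwbcPolynomial_col {u : Fin n → K} {v : Fin (n + 1) → K} (h : IsGeneric p u v)
    (j : Fin (n + 1))
    (ih : dwbc p u (v ∘ j.succAbove) * (Matrix.vandermonde u).det *
        (Matrix.vandermonde (-(v ∘ j.succAbove))).det =
      (∏ i, ∏ k, pairWeight p (u i) (v (j.succAbove k))) * (ikMatrix p u (v ∘ j.succAbove)).det) :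
    (dwbcPolynomial p u v).eval (v j) * (∏ i, (u i - v j)) *
        ((Matrix.vandermonde u).det * (Matrix.vandermonde (-v)).det) =
      (∏ i, ∏ k, pairWeight p (u i) (v k)) * (ikPolynomial p u v).eval (v j) := by
  have hpairs : ∏ i, ∏ k, pairWeight p (u i) (v k) = (∏ i, (u i - v j)) * (∏ i, (p * u i - v j)) *
      ∏ i, ∏ k, pairWeight p (u i) (v (j.succAbove k)) := by
    simp only [← prod_mul_distrib]
    exact prod_congr rfl fun i _ => Fin.prod_univ_succAbove _ j
  have hcols : ∏ k, pairWeight p (v j) (v (j.succAbove k)) =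
      (∏ k, (p * v j - v (j.succAbove k))) * ∏ k, ((-v) (j.succAbove k) - (-v) j) := by
    rw [← prod_mul_distrib]
    refine prod_congr rfl fun k _ => ?_
    simp only [Pi.neg_apply, pairWeight]
    ring
  have hneg : (-v) ∘ j.succAbove = -(v ∘ j.succAbove) := rfl
  rw [eval_dwbcPolynomial, dwbc_vecCons_self p u v j h.col_ne_zero, eval_ikPolynomial_col,
    det_vandermonde_eq_succAbove (-v) j, hneg, hpairs, hcols]
  linear_combination (∏ i, (u i - v j)) * (∏ i, (p * u i - v j)) *
    (∏ k, (p * v j - v (j.succAbove k))) * (-1) ^ (j : ℕ) *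
    (∏ k, ((-v) (j.succAbove k) - (-v) j)) * ih

lemma eval_ikPolynomial_row {u : Fin n → K} {v : Fin (n + 1) → K} (h : IsGeneric p u v)
    (i : Fin n) : (ikPolynomial p u v).eval (u i) = 0 := by
  rw [eval_ikPolynomial_eq_det u (h.pairWeight_ne_zero i)]
  exact mul_eq_zero_of_right _ (Matrix.det_zero_of_row_eq (Fin.succ_ne_zero i).symm rfl)

/-- Both sides have degree at most `2 n` in the first row parameter, and they agree when it is
equal to a column parameter or to another row parameter. -/
lemma dwbcPolynomial_eq_ikPolynomial {u : Fin n → K} {v : Fin (n + 1) → K} (h : IsGeneric p u v)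
    (ih : ∀ j : Fin (n + 1), dwbc p u (v ∘ j.succAbove) * (Matrix.vandermonde u).det *
        (Matrix.vandermonde (-(v ∘ j.succAbove))).det =
      (∏ i, ∏ k, pairWeight p (u i) (v (j.succAbove k))) * (ikMatrix p u (v ∘ j.succAbove)).det) :
    dwbcPolynomial p u v * (∏ i, (C (u i) - X)) *
        C ((Matrix.vandermonde u).det * (Matrix.vandermonde (-v)).det) =
      C (∏ i, ∏ k, pairWeight p (u i) (v k)) * ikPolynomial p u v := by
  refine eq_of_natDegree_lt_card_of_eval_eq _ _ (f := Sum.elim v u)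
    (h.col_injective.sumElim h.row_injective fun j i hji => h.pairWeight_ne_zero i j ?_) ?_ ?_
  · simp [pairWeight, hji]
  · rintro (j | i)
    · simpa [eval_prod] using eval_dwbcPolynomial_col h j (ih j)
    · simp [eval_prod, eval_ikPolynomial_row h, prod_eq_zero (mem_univ i)]
  · have hcard : Fintype.card (Fin (n + 1) ⊕ Fin n) = 2 * n + 1 := by simp; ring
    rw [hcard, Nat.lt_succ_iff, max_le_iff]
    refine ⟨(natDegree_mul_C_le _ _).trans (natDegree_mul_le.trans ?_),
      (natDegree_C_mul_le _ _).trans (natDegree_ikPolynomial_le p u v)⟩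
    rw [two_mul]
    refine add_le_add (natDegree_dwbcPolynomial_le p u v) ((natDegree_prod_le _ _).trans
      ((sum_le_card_nsmul _ _ 1 fun k _ => ?_).trans (by simp)))
    compute_degree

theorem izerginKorepin {u v : Fin n → K} (h : IsGeneric p u v) :
    dwbc p u v * (Matrix.vandermonde u).det * (Matrix.vandermonde (-v)).det =
      (∏ i, ∏ j, pairWeight p (u i) (v j)) * (ikMatrix p u v).det := by
  induction n with
  | zero => simp [dwbc_zero]
  | succ n ih =>
    obtain ⟨r, u, rfl⟩ : ∃ r u', u = Matrix.vecCons r u' :=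
      ⟨_, _, (Matrix.cons_head_tail u).symm⟩
    have htail : IsGeneric p u v := h.comp (Fin.succ_injective n) Function.injective_id
    have hpoly := dwbcPolynomial_eq_ikPolynomial htail fun j =>
      ih (htail.comp Function.injective_id j.succAbove_right_injective)
    have hr := congrArg (eval r) hpoly
    simp only [eval_mul, eval_C, eval_prod, eval_sub, eval_X, eval_dwbcPolynomial] at hr
    rw [eval_ikPolynomial_eq_det (r := r) u fun j => h.pairWeight_ne_zero 0 j] at hr
    rw [Fin.prod_univ_succ, det_vandermonde_vecCons]
    simp only [Matrix.cons_val_zero, Matrix.cons_val_succ]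
    linear_combination hr

end IzerginKorepin

section DesnanotJacobi

/-- Jacobi's complementary minor identity. -/
theorem det_mul_det_toBlocks₁₁_adjugate {m n R : Type*} [Fintype m] [Fintype n] [DecidableEq m]
    [DecidableEq n] [CommRing R] (M : Matrix (m ⊕ n) (m ⊕ n) R) :
    M.det * M.adjugate.toBlocks₁₁.det = M.det ^ Fintype.card m * M.toBlocks₂₂.det := by
  have hmul : M * Matrix.fromBlocks M.adjugate.toBlocks₁₁ 0 M.adjugate.toBlocks₂₁ 1 =
      Matrix.fromBlocks (M.det • 1) M.toBlocks₁₂ 0 M.toBlocks₂₂ := by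
    have hadj : Matrix.fromBlocks M.toBlocks₁₁ M.toBlocks₁₂ M.toBlocks₂₁ M.toBlocks₂₂ *
        Matrix.fromBlocks M.adjugate.toBlocks₁₁ M.adjugate.toBlocks₁₂ M.adjugate.toBlocks₂₁
          M.adjugate.toBlocks₂₂ = M.det • 1 := by
      rw [Matrix.fromBlocks_toBlocks, Matrix.fromBlocks_toBlocks, Matrix.mul_adjugate]
    rw [Matrix.fromBlocks_multiply, ← Matrix.fromBlocks_one, Matrix.fromBlocks_smul,
      Matrix.fromBlocks_inj] at hadj
    nth_rw 1 [← M.fromBlocks_toBlocks]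
    rw [Matrix.fromBlocks_multiply, hadj.1, hadj.2.2.1]
    simp
  have hdet := congrArg Matrix.det hmul
  rwa [Matrix.det_mul, Matrix.det_fromBlocks_zero₁₂, Matrix.det_fromBlocks_zero₂₁, Matrix.det_one,
    mul_one, Matrix.det_smul, Matrix.det_one, mul_one] at hdet

lemma desnanotJacobi_of_det_ne_zero {n : ℕ} {R : Type*} [CommRing R] [IsDomain R]
    (M : Matrix (Fin (n + 2)) (Fin (n + 2)) R) (hM : M.det ≠ 0) :
    M.det * (M.submatrix (fun i : Fin n => i.succ.succ) fun j => j.succ.succ).det =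
      (M.submatrix Fin.succ Fin.succ).det *
        (M.submatrix (Fin.succAbove 1) (Fin.succAbove 1)).det -
      (M.submatrix Fin.succ (Fin.succAbove 1)).det *
        (M.submatrix (Fin.succAbove 1) Fin.succ).det := by
  let e : Fin 2 ⊕ Fin n ≃ Fin (n + 2) := finSumFinEquiv.trans (finCongr (add_comm 2 n))
  have hJacobi := det_mul_det_toBlocks₁₁_adjugate (M.submatrix e e)
  rw [Matrix.det_submatrix_equiv_self, Matrix.adjugate_submatrix_equiv_self, Fintype.card_fin,
    sq, mul_assoc] at hJacobi
  have hminor := mul_left_cancel₀ hM hJacobi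
  have hzero : e (Sum.inl 0) = 0 := by ext; simp [e]
  have hone : e (Sum.inl 1) = 1 := by ext; simp [e]
  have hblock : (M.submatrix e e).toBlocks₂₂ =
      M.submatrix (fun i : Fin n => i.succ.succ) fun j => j.succ.succ := by
    have hinr (i : Fin n) : e (Sum.inr i) = i.succ.succ := by ext; simp [e]
    ext i j
    simp [Matrix.toBlocks₂₂, hinr]
  rw [← hblock, ← hminor, Matrix.det_fin_two]
  simp only [Matrix.toBlocks₁₁, Matrix.submatrix_apply, Matrix.of_apply, hzero, hone,
    Matrix.adjugate_fin_succ_eq_det_submatrix, Fin.succAbove_zero, Fin.val_zero, Fin.val_one]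
  ring

theorem desnanotJacobi {n : ℕ} {R : Type*} [CommRing R]
    (M : Matrix (Fin (n + 2)) (Fin (n + 2)) R) :
    M.det * (M.submatrix (fun i : Fin n => i.succ.succ) fun j => j.succ.succ).det =
      (M.submatrix Fin.succ Fin.succ).det *
        (M.submatrix (Fin.succAbove 1) (Fin.succAbove 1)).det -
      (M.submatrix Fin.succ (Fin.succAbove 1)).det *
        (M.submatrix (Fin.succAbove 1) Fin.succ).det := by
  have h := desnanotJacobi_of_det_ne_zero (n := n) (Matrix.mvPolynomialX _ _ ℤ)
    (Matrix.det_mvPolynomialX_ne_zero _ ℤ)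
  let f := MvPolynomial.eval₂Hom (Int.castRingHom R) fun q : Fin (n + 2) × Fin (n + 2) => M q.1 q.2
  have hf : (Matrix.mvPolynomialX _ _ ℤ).map f = M := by
    ext i j
    simp [f, Matrix.mvPolynomialX]
  have := congrArg f h
  simpa only [map_sub, map_mul, RingHom.map_det, RingHom.mapMatrix_apply,
    ← Matrix.submatrix_map, hf] using this

end DesnanotJacobi

section QuadraticRelation

lemma det_vandermonde_mul_succ_succ {R : Type*} [CommRing R] {n : ℕ} (u : Fin (n + 2) → R) :
    (Matrix.vandermonde u).det * (Matrix.vandermonde fun i : Fin n => u i.succ.succ).det =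
      (u 1 - u 0) * (Matrix.vandermonde (u ∘ Fin.succ)).det *
        (Matrix.vandermonde (u ∘ Fin.succAbove 1)).det := by
  have hzero := det_vandermonde_eq_succAbove u 0
  have hone := det_vandermonde_eq_succAbove (u ∘ Fin.succAbove 1) 0
  have hsucc := det_vandermonde_eq_succAbove (u ∘ Fin.succ) 0
  simp only [Fin.val_zero, pow_zero, one_mul, Fin.succAbove_zero, Fin.prod_univ_succ,
    Function.comp_def, Fin.one_succAbove_zero, Fin.one_succAbove_succ, Fin.succ_zero_eq_one]
    at hzero hone hsucc ⊢
  rw [hzero, hone]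
  ring

lemma map_pairWeight {R S : Type*} [CommRing R] [CommRing S] (f : R →+* S) (p r s : R) :
    f (pairWeight p r s) = pairWeight (f p) (f r) (f s) := by
  simp [pairWeight]

lemma prod_prod_mul_succ_succ_eq_antidiag {R : Type*} [CommSemiring R] {n : ℕ}
    (F : Fin (n + 2) → Fin (n + 2) → R) :
    (∏ i, ∏ j, F i j) * (∏ i : Fin n, ∏ j : Fin n, F i.succ.succ j.succ.succ) =
      F 0 1 * F 1 0 * (∏ i : Fin (n + 1), ∏ j : Fin (n + 1), F i.succ j.succ) *
        ∏ i : Fin (n + 1), ∏ j : Fin (n + 1), F (Fin.succAbove 1 i) (Fin.succAbove 1 j) := by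
  simp only [Fin.prod_univ_succ, Fin.one_succAbove_zero, Fin.one_succAbove_succ,
    prod_mul_distrib, Fin.succ_zero_eq_one]
  ring

lemma prod_prod_mul_succ_succ_eq_diag {R : Type*} [CommSemiring R] {n : ℕ}
    (F : Fin (n + 2) → Fin (n + 2) → R) :
    (∏ i, ∏ j, F i j) * (∏ i : Fin n, ∏ j : Fin n, F i.succ.succ j.succ.succ) =
      F 0 0 * F 1 1 * (∏ i : Fin (n + 1), ∏ j : Fin (n + 1), F i.succ (Fin.succAbove 1 j)) *
        ∏ i : Fin (n + 1), ∏ j : Fin (n + 1), F (Fin.succAbove 1 i) j.succ := by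
  simp only [Fin.prod_univ_succ, Fin.one_succAbove_zero, Fin.one_succAbove_succ,
    prod_mul_distrib, Fin.succ_zero_eq_one]
  ring

lemma IsGeneric.izerginKorepin_minor {K : Type*} [Field K] {p : K} {m n : ℕ} {u v : Fin n → K}
    (h : IsGeneric p u v) {f g : Fin m → Fin n} (hf : Function.Injective f)
    (hg : Function.Injective g) :
    dwbc p (u ∘ f) (v ∘ g) * (Matrix.vandermonde (u ∘ f)).det *
        (Matrix.vandermonde (-v ∘ g)).det =
      (∏ i, ∏ j, pairWeight p (u (f i)) (v (g j))) * ((ikMatrix p u v).submatrix f g).det :=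
  izerginKorepin (h.comp hf hg)

lemma IsGeneric.det_vandermonde_row_ne_zero {K : Type*} [Field K] {p : K} {l m n : ℕ}
    {u : Fin m → K} {v : Fin n → K} (h : IsGeneric p u v) {f : Fin l → Fin m}
    (hf : Function.Injective f) : (Matrix.vandermonde (u ∘ f)).det ≠ 0 :=
  Matrix.det_vandermonde_ne_zero_iff.2 (h.row_injective.comp hf)

lemma IsGeneric.det_vandermonde_col_ne_zero {K : Type*} [Field K] {p : K} {l m n : ℕ}
    {u : Fin m → K} {v : Fin n → K} (h : IsGeneric p u v) {g : Fin l → Fin n}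
    (hg : Function.Injective g) : (Matrix.vandermonde (-v ∘ g)).det ≠ 0 :=
  Matrix.det_vandermonde_ne_zero_iff.2 ((neg_injective.comp h.col_injective).comp hg)

lemma IsGeneric.dwbc_quadratic {K : Type*} [Field K] {p : K} {n : ℕ} {u v : Fin (n + 2) → K}
    (h : IsGeneric p u v) :
    (u 0 - u 1) * (v 1 - v 0) * dwbc p u v *
        dwbc p (fun i : Fin n => u i.succ.succ) (fun j => v j.succ.succ) =
      pairWeight p (u 0) (v 1) * pairWeight p (u 1) (v 0) * dwbc p (u ∘ Fin.succ) (v ∘ Fin.succ) *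
        dwbc p (u ∘ Fin.succAbove 1) (v ∘ Fin.succAbove 1) -
      pairWeight p (u 0) (v 0) * pairWeight p (u 1) (v 1) *
        dwbc p (u ∘ Fin.succ) (v ∘ Fin.succAbove 1) *
        dwbc p (u ∘ Fin.succAbove 1) (v ∘ Fin.succ) := by
  have hsucc := Fin.succ_injective (n + 1)
  have habove := Fin.succAbove_right_injective (p := (1 : Fin (n + 2)))
  have htwo : Function.Injective fun i : Fin n => i.succ.succ :=
    hsucc.comp (Fin.succ_injective n)
  have hpairs := prod_prod_mul_succ_succ_eq_antidiag fun i j => pairWeight p (u i) (v j)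
  have hpairs' := prod_prod_mul_succ_succ_eq_diag fun i j => pairWeight p (u i) (v j)
  refine mul_left_cancel₀ (mul_ne_zero
    (mul_ne_zero (h.det_vandermonde_row_ne_zero hsucc) (h.det_vandermonde_row_ne_zero habove))
    (mul_ne_zero (h.det_vandermonde_col_ne_zero hsucc) (h.det_vandermonde_col_ne_zero habove))) ?_
  have hrows := det_vandermonde_mul_succ_succ u
  have hcols := det_vandermonde_mul_succ_succ (-v)
  have hfull := congrArg₂ (· * ·) (izerginKorepin h) (h.izerginKorepin_minor htwo htwo)
  have hplus := congrArg₂ (· * ·) (h.izerginKorepin_minor hsucc hsucc)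
    (h.izerginKorepin_minor habove habove)
  have hminus := congrArg₂ (· * ·) (h.izerginKorepin_minor hsucc habove)
    (h.izerginKorepin_minor habove hsucc)
  have hJacobi := desnanotJacobi (ikMatrix p u v)
  simp only [Function.comp_def, Pi.neg_apply] at *
  generalize (ikMatrix p u v).det = d, ((ikMatrix p u v).submatrix (fun i : Fin n => i.succ.succ)
    fun j => j.succ.succ).det = d' at hfull hJacobi
  generalize (∏ i, ∏ j, pairWeight p (u i) (v j)) = P,
    (∏ i : Fin n, ∏ j : Fin n, pairWeight p (u i.succ.succ) (v j.succ.succ)) = P'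
    at hfull hpairs hpairs'
  generalize (Matrix.vandermonde u).det = Δ,
    (Matrix.vandermonde fun i : Fin n => u i.succ.succ).det = Δ' at hfull hrows
  linear_combination hfull -
    dwbc p u v * dwbc p (fun i : Fin n => u i.succ.succ) (fun j => v j.succ.succ) *
      ((v 0 - v 1) * (Matrix.vandermonde fun j : Fin (n + 1) => -v j.succ).det *
        (Matrix.vandermonde fun j : Fin (n + 1) => -v (Fin.succAbove 1 j)).det * hrows +
      Δ * Δ' * hcols) + P * P' * hJacobi +
    ((ikMatrix p u v).submatrix Fin.succ Fin.succ).det *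
      ((ikMatrix p u v).submatrix (Fin.succAbove 1) (Fin.succAbove 1)).det * hpairs -
    ((ikMatrix p u v).submatrix Fin.succ (Fin.succAbove 1)).det *
      ((ikMatrix p u v).submatrix (Fin.succAbove 1) Fin.succ).det * hpairs' -
    pairWeight p (u 0) (v 1) * pairWeight p (u 1) (v 0) * hplus +
    pairWeight p (u 0) (v 0) * pairWeight p (u 1) (v 1) * hminus

open MvPolynomial in
lemma isGeneric_X (n : ℕ) :
    let ι := algebraMap (MvPolynomial (Option (Fin n ⊕ Fin n)) ℤ)
      (FractionRing (MvPolynomial (Option (Fin n ⊕ Fin n)) ℤ))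
    IsGeneric (ι (X none)) (fun i => ι (X (some (.inl i)))) fun j => ι (X (some (.inr j))) := by
  intro ι
  have hι : Function.Injective ι := IsFractionRing.injective _ _
  let e := aeval (R := ℤ) fun k : Option (Fin n ⊕ Fin n) => k.elim (0 : ℤ) (Sum.elim 0 1)
  have hne {a : MvPolynomial (Option (Fin n ⊕ Fin n)) ℤ} (ha : e a ≠ 0) : ι a ≠ 0 := fun h =>
    ha (by rw [(map_eq_zero_iff ι hι).1 h, map_zero])
  refine ⟨fun i j h => ?_, fun i j h => ?_, fun i j => ?_, fun i j => ?_⟩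
  · simpa using hι h
  · simpa using hι h
  · rw [← map_pairWeight]
    exact hne (by simp [e, pairWeight])
  · rw [← map_mul, ← map_sub]
    exact hne (by simp [e])

theorem dwbc_quadratic {R : Type*} [CommRing R] (p : R) {n : ℕ} (u v : Fin (n + 2) → R) :
    (u 0 - u 1) * (v 1 - v 0) * dwbc p u v *
        dwbc p (fun i : Fin n => u i.succ.succ) (fun j => v j.succ.succ) =
      pairWeight p (u 0) (v 1) * pairWeight p (u 1) (v 0) * dwbc p (u ∘ Fin.succ) (v ∘ Fin.succ) *
        dwbc p (u ∘ Fin.succAbove 1) (v ∘ Fin.succAbove 1) -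
      pairWeight p (u 0) (v 0) * pairWeight p (u 1) (v 1) *
        dwbc p (u ∘ Fin.succ) (v ∘ Fin.succAbove 1) *
        dwbc p (u ∘ Fin.succAbove 1) (v ∘ Fin.succ) := by
  let S := MvPolynomial (Option (Fin (n + 2) ⊕ Fin (n + 2))) ℤ
  let U (i : Fin (n + 2)) : S := .X (some (.inl i))
  let V (j : Fin (n + 2)) : S := .X (some (.inr j))
  have hgeneric : (U 0 - U 1) * (V 1 - V 0) * dwbc (.X none) U V *
        dwbc (.X none) (fun i : Fin n => U i.succ.succ) (fun j => V j.succ.succ) =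
      pairWeight (.X none) (U 0) (V 1) * pairWeight (.X none) (U 1) (V 0) *
        dwbc (.X none) (U ∘ Fin.succ) (V ∘ Fin.succ) *
        dwbc (.X none) (U ∘ Fin.succAbove 1) (V ∘ Fin.succAbove 1) -
      pairWeight (.X none) (U 0) (V 0) * pairWeight (.X none) (U 1) (V 1) *
        dwbc (.X none) (U ∘ Fin.succ) (V ∘ Fin.succAbove 1) *
        dwbc (.X none) (U ∘ Fin.succAbove 1) (V ∘ Fin.succ) := by
    refine IsFractionRing.injective S (FractionRing S) ?_
    simp only [map_mul, map_sub, map_dwbc, map_pairWeight]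
    exact (isGeneric_X (n + 2)).dwbc_quadratic
  have h := congrArg (MvPolynomial.eval₂Hom (Int.castRingHom R)
    fun k => k.elim p (Sum.elim u v)) hgeneric
  simp only [map_mul, map_sub, map_dwbc, map_pairWeight] at h
  simpa [U, V, Function.comp_def] using h

end QuadraticRelation

section Gauge

variable {R : Type*} [CommRing R] {n : ℕ}

namespace VertexWeights

/-- The vertex weights multiplied by `g` at an entry `0` and by `g ^ 2` at an entry `-1`. -/
def scale (g : R) (w : VertexWeights R) : VertexWeights R :=
  ⟨g * w.a₁, g * w.a₀, g * w.b, g ^ 2 * w.c⟩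

lemma onEdges_false_top_congr {w w' : VertexWeights R} (ha : w.a₀ = w'.a₀) (hb : w.b = w'.b)
    (l r b : Bool) : w.onEdges l false r b = w'.onEdges l false r b := by
  cases l <;> cases r <;> cases b <;> simp [onEdges, ha, hb]

lemma onEdges_false_left_congr {w w' : VertexWeights R} (ha : w.a₀ = w'.a₀) (hb : w.b = w'.b)
    (t r b : Bool) : w.onEdges false t r b = w'.onEdges false t r b := by
  rw [← onEdges_swap, onEdges_false_top_congr ha hb, onEdges_swap]

end VertexWeights

namespace IsASM

lemma sum_toNat_one_sub {A : Fin n → Fin n → ℤ} (hA : IsASM A) (i : Fin n) :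
    ∑ j, (1 - A i j).toNat = n - 1 := by
  have hcast (j : Fin n) : ((1 - A i j).toNat : ℤ) = 1 - A i j := by
    have := hA.1 i j
    omega
  zify [show 1 ≤ n from i.pos]
  simp [hcast, sum_sub_distrib, hA.2.2.2.1 i]

lemma onEdges_scale {A : Fin n → Fin n → ℤ} (hA : IsASM A) (i j : Fin n) (g : R)
    (w : VertexWeights R) :
    (w.scale g).onEdges (rowEdge A i j.castSucc) (colEdge A j i.castSucc) (rowEdge A i j.succ)
        (colEdge A j i.succ) =
      g ^ (1 - A i j).toNat * w.onEdges (rowEdge A i j.castSucc) (colEdge A j i.castSucc)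
        (rowEdge A i j.succ) (colEdge A j i.succ) := by
  rcases hA.vertex_cases i j with ⟨ha, hl, ht, hr, hb⟩ | ⟨ha, hl, ht, hr, hb⟩ | ⟨ha, hr, hb⟩
  · simp [ha, hl, ht, hr, hb, VertexWeights.onEdges]
  · simp [ha, hl, ht, hr, hb, VertexWeights.onEdges, VertexWeights.scale]
  · rw [ha, hr, hb]
    cases rowEdge A i j.succ <;> cases colEdge A j i.succ <;>
      simp [VertexWeights.onEdges, VertexWeights.scale]

lemma asmWeight_scale {A : Fin n → Fin n → ℤ} (hA : IsASM A) (r s : Fin n → R)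
    (w : Fin n → Fin n → VertexWeights R) :
    asmWeight (fun i j => (w i j).scale (r i * s j)) A =
      (∏ i, r i ^ (n - 1)) * (∏ j, s j ^ (n - 1)) * asmWeight w A := by
  have hrow : ∏ i, ∏ j, r i ^ (1 - A i j).toNat = ∏ i, r i ^ (n - 1) := by
    simp only [prod_pow_eq_pow_sum, hA.sum_toNat_one_sub]
  have hcol : ∏ i, ∏ j, s j ^ (1 - A i j).toNat = ∏ j, s j ^ (n - 1) := by
    rw [prod_comm]
    simp only [prod_pow_eq_pow_sum, hA.transpose.sum_toNat_one_sub]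
  simp only [asmWeight, hA.onEdges_scale, mul_pow, prod_mul_distrib, hrow, hcol]

lemma asmWeight_mul_a₀ {A : Fin n → Fin n → ℤ} (hA : IsASM A) (f x y : R)
    (z : Fin n → Fin n → R) :
    asmWeight (fun i j => ⟨x, f * z i j, 1, y⟩) A =
      asmWeight (fun i j => ⟨f * x, z i j, 1, y⟩) A := by
  have hmul (P : Fin n → Fin n → Prop) [∀ i j, Decidable (P i j)] (a : Fin n → Fin n → R) :
      ∏ i, ∏ j, (if P i j then f * a i j else 1) =
        f ^ #{q : Fin n × Fin n | P q.1 q.2} * ∏ i, ∏ j, (if P i j then a i j else 1) := by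
    simp only [← prod_prod_ite_one, ← prod_mul_distrib, ite_mul_ite, mul_one]
  simp only [asmWeight, hA.onEdges_eq_mul, prod_mul_distrib, hmul, hA.card_a₁_eq_card_a₀]
  ring

end IsASM

/-- The edges on the top and on the left boundary are in the state `false`, which excludes the `c`
and the `a₁` vertices there. -/
lemma asmWeight_congr_of_corner {A : Fin (n + 1) → Fin (n + 1) → ℤ}
    (h00 : A 0 0 = 0) {w w' : Fin (n + 1) → Fin (n + 1) → VertexWeights R} {k k' : R}
    (hcorner : k * (w 0 0).a₀ = k' * (w' 0 0).a₀)
    (hrow : ∀ j : Fin n, (w 0 j.succ).a₀ = (w' 0 j.succ).a₀ ∧ (w 0 j.succ).b = (w' 0 j.succ).b)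
    (hcol : ∀ i : Fin n, (w i.succ 0).a₀ = (w' i.succ 0).a₀ ∧ (w i.succ 0).b = (w' i.succ 0).b)
    (hinner : ∀ i j : Fin n, w i.succ j.succ = w' i.succ j.succ) :
    k * asmWeight w A = k' * asmWeight w' A := by
  simp only [asmWeight, Fin.prod_univ_succ (n := n), Fin.castSucc_zero, onEdges_corner h00,
    hinner]
  simp only [rowEdge_zero, colEdge_zero,
    fun j => VertexWeights.onEdges_false_top_congr (hrow j).1 (hrow j).2,
    fun i => VertexWeights.onEdges_false_left_congr (hcol i).1 (hcol i).2]
  simp only [← mul_assoc, hcorner]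

end Gauge

section Specialization

open Matrix (vecCons)

variable {K : Type*} [Field K] {p u v u₁ v₁ x y z1 z2 : K}

/-- The generating function variables `x`, `y`, `z1`, `z2` are those of the six-vertex model whose
first row and first column have parameters `u₁` and `v₁` and whose other rows and columns have
parameters `u` and `v`. The equations express them in terms of the ratio `f(u, v)` of `u - v` and
`p * u - v`: `x = p * f(u, v) ^ 2`, `z1 = f(u₁, v) / f(u, v)` and `z2 = f(u, v₁) / f(u, v)`. -/
structure IsSpectralPoint (p u v u₁ v₁ x y z1 z2 : K) : Prop where
  uv_ne : u - v ≠ 0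
  u₁v_ne : u₁ - v ≠ 0
  uv₁_ne : u - v₁ ≠ 0
  u₁v₁_ne : u₁ - v₁ ≠ 0
  puv_ne : p * u - v ≠ 0
  pu₁v_ne : p * u₁ - v ≠ 0
  puv₁_ne : p * u - v₁ ≠ 0
  x_mul : x * (p * u - v) ^ 2 = p * (u - v) ^ 2
  y_mul : y * (p * u - v) ^ 2 = (p - 1) ^ 2 * u * v
  z1_mul : z1 * ((u - v) * (p * u₁ - v)) = (u₁ - v) * (p * u - v)
  z2_mul : z2 * ((u - v) * (p * u - v₁)) = (u - v₁) * (p * u - v)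

namespace IsSpectralPoint

lemma row (h : IsSpectralPoint p u v u₁ v₁ x y z1 z2) : IsSpectralPoint p u v u₁ v x y z1 1 where
  __ := h
  uv₁_ne := h.uv_ne
  u₁v₁_ne := h.u₁v_ne
  puv₁_ne := h.puv_ne
  z2_mul := one_mul _

lemma col (h : IsSpectralPoint p u v u₁ v₁ x y z1 z2) : IsSpectralPoint p u v u v₁ x y 1 z2 where
  __ := h
  u₁v_ne := h.uv_ne
  u₁v₁_ne := h.uv₁_ne
  pu₁v_ne := h.puv_ne
  z1_mul := one_mul _

lemma spectralWeights_eq_scale (h : IsSpectralPoint p u v u₁ v₁ x y z1 z2) :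
    spectralWeights p u v =
      .scale (p * u - v) ⟨p * ((u - v) / (p * u - v)), (u - v) / (p * u - v), 1, y⟩ := by
  have hratio := mul_div_cancel₀ (u - v) h.puv_ne
  simp only [spectralWeights, VertexWeights.scale, VertexWeights.mk.injEq]
  exact ⟨by rw [mul_left_comm, hratio], hratio.symm, (mul_one _).symm,
    by rw [mul_comm _ y, h.y_mul]⟩

lemma ratio_mul_ratio (h : IsSpectralPoint p u v u₁ v₁ x y z1 z2) :
    (u - v) / (p * u - v) * (p * ((u - v) / (p * u - v))) = x := by
  rw [mul_left_comm, ← pow_two, div_pow, ← mul_div_assoc, ← h.x_mul]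
  exact mul_div_cancel_right₀ x (pow_ne_zero 2 h.puv_ne)

lemma ratio_mul_z1 (h : IsSpectralPoint p u v u₁ v₁ x y z1 z2) :
    (u - v) / (p * u - v) * z1 = (u₁ - v) / (p * u₁ - v) := by
  rw [div_mul_eq_mul_div, div_eq_div_iff h.puv_ne h.pu₁v_ne]
  linear_combination h.z1_mul

lemma ratio_mul_z2 (h : IsSpectralPoint p u v u₁ v₁ x y z1 z2) :
    (u - v) / (p * u - v) * z2 = (u - v₁) / (p * u - v₁) := by
  rw [div_mul_eq_mul_div, div_eq_div_iff h.puv_ne h.puv₁_ne]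
  linear_combination h.z2_mul

lemma dwbc_const (h : IsSpectralPoint p u v u₁ v₁ x y z1 z2) (n : ℕ) :
    dwbc p (fun _ : Fin n => u) (fun _ => v) = (p * u - v) ^ (n * (n - 1)) * Zun n x y := by
  rw [Zun_eq_partitionFunction, dwbc, partitionFunction, partitionFunction, mul_sum]
  refine sum_congr rfl fun A hA => ?_
  have hA := mem_asmSet.1 hA
  have hshift := hA.asmWeight_mul_a₀ ((u - v) / (p * u - v)) (p * ((u - v) / (p * u - v))) y
    fun _ _ => 1
  have hgauge := hA.asmWeight_scale (fun _ => p * u - v) (fun _ => 1) fun _ _ =>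
    ⟨p * ((u - v) / (p * u - v)), (u - v) / (p * u - v), 1, y⟩
  simp only [mul_one, h.ratio_mul_ratio] at hshift
  simp only [mul_one, ← h.spectralWeights_eq_scale, hshift] at hgauge
  simpa [← pow_mul, mul_comm n] using hgauge

lemma sum_corner (h : IsSpectralPoint p u v u₁ v₁ x y z1 z2) {n : ℕ}
    {A : Fin (n + 1) → Fin (n + 1) → ℤ} (hA : IsASM A) (h00 : A 0 0 = 0) :
    (u₁ - v) * (u - v₁) * asmWeight (fun i j =>
        spectralWeights p (vecCons u₁ (fun _ => u) i) (vecCons v₁ (fun _ => v) j)) A =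
      (u - v) * (u₁ - v₁) * ((p * u₁ - v) ^ n * (p * u - v₁) ^ n * (p * u - v) ^ (n * (n - 1)) *
        asmWeight (fun i j => ⟨x, edgeMark z1 z2 i j, 1, y⟩) A) := by
  have hgauge := hA.asmWeight_scale (vecCons (p * u₁ - v) fun _ => p * u - v)
    (vecCons ((p * u - v₁) / (p * u - v)) fun _ => 1) fun i j =>
      ⟨p * ((u - v) / (p * u - v)), (u - v) / (p * u - v) * edgeMark z1 z2 i j, 1, y⟩
  have hprod : (∏ i, vecCons (p * u₁ - v) (fun _ : Fin n => p * u - v) i ^ n) *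
      ∏ j, vecCons ((p * u - v₁) / (p * u - v)) (fun _ : Fin n => 1) j ^ n =
      (p * u₁ - v) ^ n * (p * u - v₁) ^ n * (p * u - v) ^ (n * (n - 1)) := by
    have hpow : ((p * u - v) ^ n) ^ n = (p * u - v) ^ (n * (n - 1)) * (p * u - v) ^ n := by
      rw [← pow_mul, ← pow_add, Nat.mul_sub_one, Nat.sub_add_cancel n.le_mul_self]
    have hne : (p * u - v) ^ n ≠ 0 := pow_ne_zero n h.puv_ne
    simp only [Fin.prod_univ_succ, Matrix.cons_val_zero, Matrix.cons_val_succ, prod_const,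
      card_univ, Fintype.card_fin, one_pow, mul_one, div_pow, hpow]
    field_simp
  rw [add_tsub_cancel_right, hprod, hA.asmWeight_mul_a₀, h.ratio_mul_ratio] at hgauge
  rw [← hgauge]
  refine asmWeight_congr_of_corner h00 ?_ (fun j => ?_) (fun i => ?_) fun i j => ?_
  · have hregroup : (u - v) * ((p * u₁ - v) * ((p * u - v₁) / (p * u - v)) *
        ((u - v) / (p * u - v) * (z1 * z2))) =
        (p * u₁ - v) * ((u - v) / (p * u - v) * z1) *
          ((p * u - v₁) * ((u - v) / (p * u - v) * z2)) := by ring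
    rw [h.ratio_mul_z1, h.ratio_mul_z2, mul_div_cancel₀ _ h.pu₁v_ne, mul_div_cancel₀ _ h.puv₁_ne]
      at hregroup
    simp only [spectralWeights, VertexWeights.scale, edgeMark, Matrix.cons_val_zero, if_true]
    linear_combination -(u₁ - v₁) * hregroup
  · simp [spectralWeights, VertexWeights.scale, edgeMark, h.ratio_mul_z1,
      mul_div_cancel₀ _ h.pu₁v_ne]
  · simp [spectralWeights, VertexWeights.scale, edgeMark, h.ratio_mul_z2,
      mul_div_cancel₀ _ h.puv₁_ne, mul_div_cancel₀ _ h.puv_ne]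
  · simp [edgeMark, h.spectralWeights_eq_scale]

lemma dwbc_border (h : IsSpectralPoint p u v u₁ v₁ x y z1 z2) (n : ℕ) :
    (u₁ - v) * (u - v₁) * dwbc p (vecCons u₁ fun _ : Fin n => u) (vecCons v₁ fun _ => v) =
      (p * u₁ - v) ^ n * (p * u - v₁) ^ n * (p * u - v) ^ (n * (n - 1)) *
        ((u - v) * (u₁ - v₁) * Zadj (n + 1) x y z1 z2 + (u₁ - u) * (v - v₁) * Zun n x y) := by
  have hZadj : Zadj (n + 1) x y z1 z2 = Zun n x y +
      ∑ A ∈ asmSet (n + 1) with A 0 0 = 0,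
        asmWeight (fun i j => ⟨x, edgeMark z1 z2 i j, 1, y⟩) A := by
    rw [Zadj_eq_partitionFunction, partitionFunction_eq_border_add, Zun_eq_partitionFunction]
    simp [edgeMark]
  have hcorner := sum_congr rfl fun A hA =>
    h.sum_corner (n := n) (mem_asmSet.1 (mem_filter.1 hA).1) (mem_filter.1 hA).2
  rw [← mul_sum, ← mul_sum, ← mul_sum, ← sub_eq_of_eq_add' hZadj] at hcorner
  have hdwbc : dwbc p (vecCons u₁ fun _ : Fin n => u) (vecCons v₁ fun _ => v) =
      (p * u - v₁) ^ n * (p * u₁ - v) ^ n * ((p * u - v) ^ (n * (n - 1)) * Zun n x y) +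
        ∑ A ∈ asmSet (n + 1) with A 0 0 = 0, asmWeight (fun i j =>
          spectralWeights p (vecCons u₁ (fun _ => u) i) (vecCons v₁ (fun _ => v) j)) A := by
    rw [← h.dwbc_const, dwbc, partitionFunction_eq_border_add]
    simp [spectralWeights, dwbc]
  rw [hdwbc, mul_add, hcorner]
  ring

lemma dwbc_row (h : IsSpectralPoint p u v u₁ v₁ x y z1 z2) (n : ℕ) :
    dwbc p (vecCons u₁ fun _ : Fin n => u) (fun _ => v) =
      (p * u₁ - v) ^ n * (p * u - v) ^ n * (p * u - v) ^ (n * (n - 1)) * Zsing (n + 1) x y z1 := by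
  have hborder := h.row.dwbc_border n
  rw [Matrix.vecCons_const] at hborder
  change _ = _ * (_ * Zsing (n + 1) x y z1 + _) at hborder
  refine mul_left_cancel₀ (mul_ne_zero h.u₁v_ne h.uv_ne) ?_
  linear_combination hborder

lemma dwbc_col (h : IsSpectralPoint p u v u₁ v₁ x y z1 z2) (n : ℕ) :
    dwbc p (fun _ => u) (vecCons v₁ fun _ : Fin n => v) =
      (p * u - v) ^ n * (p * u - v₁) ^ n * (p * u - v) ^ (n * (n - 1)) * Zsing (n + 1) x y z2 := by
  have hborder := h.col.dwbc_border n
  rw [Matrix.vecCons_const, Zadj_one_left] at hborder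
  refine mul_left_cancel₀ (mul_ne_zero h.uv_ne h.uv₁_ne) ?_
  linear_combination hborder

lemma spectral_recursion (h : IsSpectralPoint p u v u₁ v₁ x y z1 z2) (n : ℕ) :
    (u₁ - u) * (v - v₁) * ((p * u₁ - v) * (p * u - v₁)) *
        (Zadj (n + 2) x y z1 z2 * Zun n x y - Zun (n + 1) x y * Zun n x y) =
      (u₁ - v) * (u - v₁) * ((p * u₁ - v) * (p * u - v₁) *
          (Zadj (n + 1) x y z1 z2 * Zun (n + 1) x y) -
        (p * u - v) * (p * u₁ - v₁) * (Zsing (n + 1) x y z1 * Zsing (n + 1) x y z2)) := by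
  have hquad := dwbc_quadratic p (vecCons u₁ fun _ : Fin (n + 1) => u) (vecCons v₁ fun _ => v)
  have hdel (a b : K) : vecCons a (fun _ : Fin (n + 1) => b) ∘ Fin.succAbove 1 =
      vecCons a fun _ => b := by
    funext i
    cases i using Fin.cases <;> simp
  have htail (a b : K) : vecCons a (fun _ : Fin (n + 1) => b) ∘ Fin.succ = fun _ => b := rfl
  have hpow : (p * u - v) ^ ((n + 1) * (n + 1 - 1)) =
      (p * u - v) ^ (n * (n - 1)) * ((p * u - v) ^ n) ^ 2 := by
    have hle := n.le_mul_self
    rw [add_tsub_cancel_right, ← pow_mul, ← pow_add, Nat.mul_sub_one, add_one_mul]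
    congr 1
    omega
  simp only [Matrix.cons_val_zero, Matrix.cons_val_succ, Matrix.cons_val_one, hdel, htail,
    h.dwbc_const, h.dwbc_row, h.dwbc_col, hpow, pairWeight] at hquad
  have hborder := h.dwbc_border n
  have hborder' := h.dwbc_border (n + 1)
  rw [hpow, pow_succ, pow_succ] at hborder'
  have hB := pow_ne_zero n h.puv_ne
  have hB₁ := pow_ne_zero n h.pu₁v_ne
  have hB₂ := pow_ne_zero n h.puv₁_ne
  have hq := pow_ne_zero (n * (n - 1)) h.puv_ne
  generalize (p * u - v) ^ (n * (n - 1)) = q, (p * u - v) ^ n = B, (p * u₁ - v) ^ n = B₁,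
    (p * u - v₁) ^ n = B₂ at *
  refine mul_left_cancel₀ (mul_ne_zero (mul_ne_zero (pow_ne_zero 2 (mul_ne_zero hq hB))
    (mul_ne_zero hB₁ hB₂)) (mul_ne_zero h.uv_ne h.u₁v₁_ne)) ?_
  linear_combination (u₁ - v) * (u - v₁) * hquad -
    (u₁ - u) * (v - v₁) * q * Zun n x y * hborder' +
    (u₁ - v) * (p * u₁ - v) * (u - v₁) * (p * u - v₁) * q * B ^ 2 * Zun (n + 1) x y * hborder

end IsSpectralPoint

end Specialization

section Recursion

variable {R S : Type*} [CommRing R] [CommRing S] {n : ℕ} {x y z1 z2 : R}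

/-- The recursion expressing `Zadj (n + 2)` in terms of the generating functions of smaller size. -/
def AdjRecursion (n : ℕ) (x y z1 z2 : R) : Prop :=
  (z1 - 1) * (z2 - 1) * Zadj (n + 2) x y z1 z2 * Zun n x y =
    y * z1 * z2 * Zadj (n + 1) x y z1 z2 * Zun (n + 1) x y
    + (x * (z1 - 1) * (z2 - 1) - y) * z1 * z2 * Zsing (n + 1) x y z1 * Zsing (n + 1) x y z2
    + (z1 - 1) * (z2 - 1) * Zun (n + 1) x y * Zun n x y

lemma AdjRecursion.map (f : R →+* S) (h : AdjRecursion n x y z1 z2) :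
    AdjRecursion n (f x) (f y) (f z1) (f z2) := by
  simpa only [AdjRecursion, Zadj, Zun, Zsing, map_mul, map_add, map_sub, map_Zqua, map_one]
    using congrArg f h

lemma AdjRecursion.of_map {f : R →+* S} (hf : Function.Injective f)
    (h : AdjRecursion n (f x) (f y) (f z1) (f z2)) : AdjRecursion n x y z1 z2 := by
  apply hf
  simpa only [AdjRecursion, Zadj, Zun, Zsing, map_mul, map_add, map_sub, map_Zqua, map_one] using h

theorem IsSpectralPoint.adjRecursion {K : Type*} [Field K] {p u v u₁ v₁ x y z1 z2 : K}
    (h : IsSpectralPoint p u v u₁ v₁ x y z1 z2) (n : ℕ) : AdjRecursion n x y z1 z2 := by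
  have hz1 : (z1 - 1) * ((u - v) * (p * u₁ - v)) = (p - 1) * v * (u₁ - u) := by
    linear_combination h.z1_mul
  have hz2 : (z2 - 1) * ((u - v) * (p * u - v₁)) = (p - 1) * u * (v - v₁) := by
    linear_combination h.z2_mul
  have hsub : (z1 - 1) * (z2 - 1) * ((u - v) ^ 2 * ((p * u₁ - v) * (p * u - v₁))) =
      y * (p * u - v) ^ 2 * ((u₁ - u) * (v - v₁)) := by
    linear_combination (z2 - 1) * ((u - v) * (p * u - v₁)) * hz1 + (p - 1) * v * (u₁ - u) * hz2 -
      (u₁ - u) * (v - v₁) * h.y_mul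
  have hmul : z1 * z2 * ((u - v) ^ 2 * ((p * u₁ - v) * (p * u - v₁))) =
      (u₁ - v) * (u - v₁) * (p * u - v) ^ 2 := by
    linear_combination z2 * ((u - v) * (p * u - v₁)) * h.z1_mul +
      (u₁ - v) * (p * u - v) * h.z2_mul
  have hcoeff : (x * (z1 - 1) * (z2 - 1) - y) * ((p * u₁ - v) * (p * u - v₁)) =
      -y * (p * u - v) * (p * u₁ - v₁) := by
    refine mul_left_cancel₀ (mul_ne_zero (pow_ne_zero 2 h.uv_ne) (pow_ne_zero 2 h.puv_ne)) ?_
    linear_combination (p * u - v) ^ 2 * x * hsub +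
      y * (p * u - v) ^ 2 * ((u₁ - u) * (v - v₁)) * h.x_mul
  refine mul_left_cancel₀ (mul_ne_zero (pow_ne_zero 2 h.uv_ne)
    (pow_ne_zero 2 (mul_ne_zero h.pu₁v_ne h.puv₁_ne))) ?_
  linear_combination y * (p * u - v) ^ 2 * h.spectral_recursion n +
    (p * u₁ - v) * (p * u - v₁) * (Zadj (n + 2) x y z1 z2 - Zun (n + 1) x y) * Zun n x y * hsub -
    (p * u₁ - v) * (p * u - v₁) * y * Zadj (n + 1) x y z1 z2 * Zun (n + 1) x y * hmul -
    (x * (z1 - 1) * (z2 - 1) - y) * ((p * u₁ - v) * (p * u - v₁)) *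
      Zsing (n + 1) x y z1 * Zsing (n + 1) x y z2 * hmul -
    (u₁ - v) * (u - v₁) * (p * u - v) ^ 2 * Zsing (n + 1) x y z1 * Zsing (n + 1) x y z2 * hcoeff

lemma isSpectralPoint_of_ne {K : Type*} [Field K] {d e z1 z2 : K} (hd : d ≠ 0) (hd₁ : 1 - d ≠ 0)
    (he₁ : 1 - e ≠ 0) (hde : e - d ≠ 0) (hz1 : z1 ≠ 0) (hz2 : z2 ≠ 0) (hez : 1 - e * z1 ≠ 0)
    (hdz : 1 - d * z2 ≠ 0)
    (h : (1 - e) * (1 - d * z1) * (1 - d * z2) - (1 - d) * (1 - e * z2) * (1 - e * z1) ≠ 0) :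
    IsSpectralPoint (e / d) (1 - d) (1 - e) ((1 - e) * (1 - d * z1) / (1 - e * z1))
      ((1 - d) * (1 - e * z2) / (1 - d * z2)) (d * e) ((1 - d) * (1 - e)) z1 z2 := by
  have huv : 1 - d - (1 - e) = e - d := by ring
  have hpuv : e / d * (1 - d) - (1 - e) = (e - d) / d := by
    field_simp
    ring
  have hu₁v : (1 - e) * (1 - d * z1) / (1 - e * z1) - (1 - e) =
      (1 - e) * z1 * (e - d) / (1 - e * z1) := by
    field_simp
    ring
  have hpu₁v : e / d * ((1 - e) * (1 - d * z1) / (1 - e * z1)) - (1 - e) =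
      (1 - e) * (e - d) / (d * (1 - e * z1)) := by
    field_simp
    ring
  have huv₁ : 1 - d - (1 - d) * (1 - e * z2) / (1 - d * z2) =
      (1 - d) * z2 * (e - d) / (1 - d * z2) := by
    field_simp
    ring
  have hpuv₁ : e / d * (1 - d) - (1 - d) * (1 - e * z2) / (1 - d * z2) =
      (1 - d) * (e - d) / (d * (1 - d * z2)) := by
    field_simp
    ring
  have hu₁v₁ : (1 - e) * (1 - d * z1) / (1 - e * z1) - (1 - d) * (1 - e * z2) / (1 - d * z2) =
      ((1 - e) * (1 - d * z1) * (1 - d * z2) - (1 - d) * (1 - e * z2) * (1 - e * z1)) /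
        ((1 - e * z1) * (1 - d * z2)) := by
    field_simp
  exact
    { uv_ne := huv ▸ hde
      u₁v_ne := hu₁v ▸ div_ne_zero (mul_ne_zero (mul_ne_zero he₁ hz1) hde) hez
      uv₁_ne := huv₁ ▸ div_ne_zero (mul_ne_zero (mul_ne_zero hd₁ hz2) hde) hdz
      u₁v₁_ne := hu₁v₁ ▸ div_ne_zero h (mul_ne_zero hez hdz)
      puv_ne := hpuv ▸ div_ne_zero hde hd
      pu₁v_ne := hpu₁v ▸ div_ne_zero (mul_ne_zero he₁ hde) (mul_ne_zero hd hez)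
      puv₁_ne := hpuv₁ ▸ div_ne_zero (mul_ne_zero hd₁ hde) (mul_ne_zero hd hdz)
      x_mul := by rw [huv, hpuv]; field_simp
      y_mul := by rw [hpuv]; field_simp
      z1_mul := by rw [huv, hpu₁v, hu₁v, hpuv]; field_simp
      z2_mul := by rw [huv, hpuv₁, huv₁, hpuv]; field_simp }

theorem adjRecursion_mul (n : ℕ) (d e z1 z2 : R) :
    AdjRecursion n (d * e) ((1 - d) * (1 - e)) z1 z2 := by
  let A := MvPolynomial (Fin 4) ℤ
  let ι := algebraMap A (FractionRing A)
  have hι : Function.Injective ι := IsFractionRing.injective _ _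
  have hne {a : A} (ha : MvPolynomial.eval ![2, 3, 1, 1] a ≠ 0) : ι a ≠ 0 := fun h =>
    ha (by rw [(map_eq_zero_iff ι hι).1 h, map_zero])
  have hgeneric : AdjRecursion n (.X 0 * .X 1 : A) ((1 - .X 0) * (1 - .X 1)) (.X 2) (.X 3) := by
    refine .of_map hι ?_
    simp only [map_mul, map_sub, map_one]
    refine (isSpectralPoint_of_ne ?_ ?_ ?_ ?_ ?_ ?_ ?_ ?_ ?_).adjRecursion n
    any_goals simp only [← map_mul, ← map_sub, ← map_one ι]
    all_goals exact hne (by simp)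
  have hmap := hgeneric.map (MvPolynomial.eval₂Hom (Int.castRingHom R) ![d, e, z1, z2])
  simp only [map_mul, map_sub, map_one] at hmap
  simpa using hmap

open Polynomial in
theorem adjRecursion (n : ℕ) (x y z1 z2 : R) : AdjRecursion n x y z1 z2 := by
  rcases subsingleton_or_nontrivial R with _ | _
  · exact Subsingleton.elim _ _
  let q : R[X] := X ^ 2 - C (x + 1 - y) * X + C x
  have hq : q.Monic := by
    unfold q
    monicity!
  have hdeg : q.degree = 2 := by
    unfold q
    compute_degree!
  have hof : Function.Injective (AdjoinRoot.of q) := by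
    rw [injective_iff_map_eq_zero]
    intro a ha
    by_contra ha₀
    refine AdjoinRoot.mk_ne_zero_of_degree_lt hq (C_ne_zero.2 ha₀) ?_ ha
    exact degree_C_le.trans_lt (by simp [hdeg])
  let d := AdjoinRoot.root q
  have hroot : d ^ 2 - AdjoinRoot.of q (x + 1 - y) * d + AdjoinRoot.of q x = 0 := by
    simpa [q] using AdjoinRoot.eval₂_root q
  simp only [map_add, map_sub, map_one] at hroot
  refine .of_map hof ?_
  convert adjRecursion_mul n d (AdjoinRoot.of q (x + 1 - y) - d) (AdjoinRoot.of q z1)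
    (AdjoinRoot.of q z2) using 1
  all_goals
    simp only [map_add, map_sub, map_one]
    linear_combination hroot

end Recursion

/-- Recursion for the adjacent-boundary doubly-refined ASM generating function
(the convention `Z_0(x,y) = 1` holds definitionally: `Zun 0 x y = 1`), stated
for all values of the variables in any commutative ring, equivalently as an
identity of polynomials in `ℤ[x,y,z1,z2]`. -/
theorem stmt2 {R : Type*} [CommRing R] (x y z1 z2 : R) (n : ℕ) (hn : 2 ≤ n) :
    (z1 - 1) * (z2 - 1) * Zadj n x y z1 z2 * Zun (n - 2) x y =
      y * z1 * z2 * Zadj (n - 1) x y z1 z2 * Zun (n - 1) x y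
      + (x * (z1 - 1) * (z2 - 1) - y) * z1 * z2 *
          Zsing (n - 1) x y z1 * Zsing (n - 1) x y z2
      + (z1 - 1) * (z2 - 1) * Zun (n - 1) x y * Zun (n - 2) x y := by
  obtain ⟨m, rfl⟩ := Nat.exists_eq_add_of_le' hn
  exact adjRecursion m x y z1 z2
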